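/- arXiv:1502.01413 — 2 statements merged into one kernel-verified Lean document; each statement's English description precedes it below -/
import Mathlib

section
/- For every ρ ∈ (−1,1), (4/π) Σ_{ℓ=1}^∞ ((2ℓ−3)!!)² / (2ℓ)! · (1 − 2^{−(2ℓ−1)}) · ρ^{2ℓ} = (4/π) ( ρ arcsin ρ + √(1−ρ²) − ρ arcsin(ρ/2) − √(4−ρ²) + 1 ). Consequently, for (X,Y) bivariate normal N₂(0,Σ) with standard normal marginals and correlation ρ, V²(X,Y) = (4/π)( ρ arcsin ρ + √(1−ρ²) − ρ arcsin(ρ/2) − √(4−ρ²) + 1 ). -/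
/-!
Write `aₙ = ((2n-1)‼)² / (2n+2)!` and let `G` be the bracket in the closed form.

*The series.* The binomial series gives `∑ ((2n-1)‼)² / (2n)! x²ⁿ = 1 / √(1 - x²)`, and integrating
it termwise twice from `0` gives `∑ aₙ x²ⁿ⁺² = x arcsin x + √(1 - x²) - 1`
(`hasSum_arcsin_primitive`). Since `(1 - 2^{-(2n+1)}) ρ²ⁿ⁺² = ρ²ⁿ⁺² - 2 (ρ/2)²ⁿ⁺²`, subtracting twice
the value at `ρ/2` from the value at `ρ` gives `G(ρ)` (`hasSum_closed_form`).

*The integral.* Completing the square twice gives the joint characteristic function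
`exp(-(s² + t² + 2ρst)/2)` (`jointCF_bvn`), so the integrand in the distance covariance is
`e^{-s²-t²} (e^{-ρst} - 1)² / (s² t²)`. This is nonnegative, and adding its reflection under
`t ↦ -t` gives `e^{-s²-t²} (2 cosh 2u - 4 cosh u + 2) / (s² t²)` with `u = ρst`, whose expansion in
powers of `u` has only nonnegative terms (`hasSum_symTerm`). Monotone convergence therefore allows
termwise integration. Each term is a product of two even Gaussian moments
`∫ x²ⁿ e^{-x²} = Γ(n + 1/2) = (2n-1)‼ √π / 2ⁿ`, which produces exactly the series above
(`lintegral_bvnIntegrand`).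
-/

open MeasureTheory

/-- The bivariate normal density with standard normal marginals and correlation `ρ`. -/
noncomputable def bvnDensity (ρ x y : ℝ) : ℝ :=
  (2 * Real.pi)⁻¹ * (1 - ρ ^ 2) ^ (-(1/2 : ℝ)) *
    Real.exp (-(x ^ 2 + y ^ 2 - 2 * ρ * x * y) / (2 * (1 - ρ ^ 2)))

/-- Joint characteristic function of a pair of real random variables with joint density `φ`. -/
noncomputable def jointCF₁ (φ : ℝ → ℝ → ℝ) (s t : ℝ) : ℂ :=
  ∫ z : ℝ × ℝ, Complex.exp (Complex.I * (s * z.1 + t * z.2)) * (φ z.1 z.2 : ℝ)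

/-- Squared distance covariance `V²(X,Y)` of a pair of real random variables with joint
density `φ`; here `γ₁ = π`. -/
noncomputable def dcov₁ (φ : ℝ → ℝ → ℝ) : ℝ :=
  (Real.pi * Real.pi)⁻¹ *
    ∫ w : ℝ × ℝ, ‖jointCF₁ φ w.1 w.2 - jointCF₁ φ w.1 0 * jointCF₁ φ 0 w.2‖ ^ 2 /
      (w.1 ^ 2 * w.2 ^ 2)

open scoped Nat

/-! ### The series for the arcsine and its primitive -/

lemma hasSum_of_eq {f g : ℕ → ℝ} {a b : ℝ} (h : HasSum f a) (hfg : ∀ n, g n = f n)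
    (hab : b = a) : HasSum g b := by
  rw [funext hfg, hab]; exact h

/-- The coefficient `((2n-1)‼)² / (2n)! = binom(2n, n) / 4ⁿ` of `x²ⁿ` in `1 / √(1 - x²)`.
For `n = 0` the truncated subtraction gives `0‼ = 1 = (-1)‼`. -/
noncomputable def arcCoeff (n : ℕ) : ℝ := ((2 * n - 1)‼ : ℝ) ^ 2 / ((2 * n)! : ℝ)

lemma arcCoeff_nonneg (n : ℕ) : 0 ≤ arcCoeff n := by unfold arcCoeff; positivity

lemma arcCoeff_succ (n : ℕ) :
    arcCoeff (n + 1) = arcCoeff n * ((n + 1 / 2 : ℝ) / (n + 1)) := by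
  have h : (2 * (n + 1) - 1)‼ = (2 * n + 1) * (2 * n - 1)‼ := by
    rw [show 2 * (n + 1) - 1 = 2 * n + 1 by omega, Nat.doubleFactorial_add_one]
  have h2 : (2 * (n + 1))! = (2 * n + 2) * ((2 * n + 1) * (2 * n)!) := by
    rw [show 2 * (n + 1) = 2 * n + 1 + 1 by ring, Nat.factorial_succ, Nat.factorial_succ]
  unfold arcCoeff
  rw [h, h2]
  have : ((2 * n)! : ℝ) ≠ 0 := by positivity
  push_cast
  field_simp

lemma arcCoeff_eq_choose (n : ℕ) : Ring.choose ((1 / 2 : ℝ) + n - 1) n = arcCoeff n := by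
  have h0 : Ring.choose ((1 / 2 : ℝ) + n - 1) n = Ring.multichoose (1 / 2 : ℝ) n := by
    rw [Ring.choose]; congr 1; ring
  have h1 := Ring.factorial_nsmul_multichoose_eq_ascPochhammer (1 / 2 : ℝ) n
  rw [Polynomial.ascPochhammer_smeval_eq_eval] at h1
  have h2 : ∀ m : ℕ, (ascPochhammer ℝ m).eval (1 / 2) = m ! * arcCoeff m := by
    intro m
    induction m with
    | zero => simp [arcCoeff]
    | succ m ih =>
      rw [ascPochhammer_succ_eval, ih, arcCoeff_succ, Nat.factorial_succ]
      push_cast; field_simp; ring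
  rw [h2, nsmul_eq_mul] at h1
  rw [h0]
  exact mul_left_cancel₀ (by positivity) h1

lemma hasSum_inv_sqrt {x : ℝ} (hx : |x| < 1) :
    HasSum (fun n => arcCoeff n * x ^ (2 * n)) (√(1 - x ^ 2))⁻¹ := by
  have hx2 : x ^ 2 < 1 := by rwa [sq_lt_one_iff_abs_lt_one]
  have hn : ‖x‖₊ ^ 2 < 1 := by
    rw [← NNReal.coe_lt_coe]; simpa using hx
  have h := (Real.one_div_one_sub_rpow_hasFPowerSeriesOnBall_zero (1 / 2)).hasSum (y := x ^ 2)
    (by simpa [enorm_eq_nnnorm] using by exact_mod_cast hn)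
  simp only [zero_add, FormalMultilinearSeries.ofScalars_apply_eq, arcCoeff_eq_choose] at h
  rw [Real.sqrt_eq_rpow, ← one_div]
  simpa [smul_eq_mul, ← pow_mul] using h

/-- Termwise integration from `0` of a power series with nonnegative coefficients. Nonnegativity
makes the series at `|x|` a convergent dominating series on the segment from `0` to `x`. -/
lemma hasSum_primitive {b : ℕ → ℝ} (hb : ∀ n, 0 ≤ b n) (e : ℕ → ℕ) {f g : ℝ → ℝ}
    (hf : ∀ x, |x| < 1 → HasSum (fun n => b n * x ^ e n) (f x))
    (hfc : ContinuousOn f (Set.Ioo (-1) 1))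
    (hg : ∀ x, |x| < 1 → HasDerivAt g (f x) x) (hg0 : g 0 = 0) {x : ℝ} (hx : |x| < 1) :
    HasSum (fun n => b n / ((e n : ℝ) + 1) * x ^ (e n + 1)) (g x) := by
  have hle : ∀ t ∈ Set.uIcc 0 x, |t| ≤ |x| := fun t ht => by
    simpa using Set.abs_sub_left_of_mem_uIcc ht
  have hsub : Set.uIcc 0 x ⊆ Set.Ioo (-1) 1 := fun t ht => by
    simpa [abs_lt] using (hle t ht).trans_lt hx
  have key := intervalIntegral.hasSum_integral_of_dominated_convergence (a := 0) (b := x)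
    (μ := volume) (F := fun n t => b n * t ^ e n) (f := f) (fun n _ => b n * |x| ^ e n)
    (fun n => by fun_prop)
    (fun n => Filter.Eventually.of_forall fun t ht => by
      rw [norm_mul, norm_pow, Real.norm_eq_abs, Real.norm_eq_abs, abs_of_nonneg (hb n)]
      have := hle t (Set.uIoc_subset_uIcc ht)
      have := hb n
      gcongr)
    (Filter.Eventually.of_forall fun t _ => (hf |x| (by simpa using hx)).summable)
    (by simp)
    (Filter.Eventually.of_forall fun t ht =>
      hf t ((hle t (Set.uIoc_subset_uIcc ht)).trans_lt hx))
  rw [intervalIntegral.integral_eq_sub_of_hasDerivAt (f := g)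
    (fun t ht => hg t ((hle t ht).trans_lt hx))
    (hfc.mono hsub).intervalIntegrable, hg0, sub_zero] at key
  refine hasSum_of_eq key (fun n => ?_) rfl
  rw [intervalIntegral.integral_const_mul, integral_pow]
  simp
  ring

lemma hasSum_arcsin {x : ℝ} (hx : |x| < 1) :
    HasSum (fun n => arcCoeff n / (((2 * n : ℕ) : ℝ) + 1) * x ^ (2 * n + 1)) (Real.arcsin x) := by
  refine hasSum_primitive arcCoeff_nonneg (fun n => 2 * n) (fun x hx => hasSum_inv_sqrt hx) ?_
    (fun x hx => ?_) Real.arcsin_zero hx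
  · refine ContinuousOn.inv₀ (by fun_prop) fun x hx => ?_
    have : 0 < 1 - x ^ 2 := by nlinarith [hx.1, hx.2]
    positivity
  · have := Real.hasDerivAt_arcsin (x := x) (by grind) (by grind)
    rwa [one_div] at this

lemma hasSum_arcsin_primitive {x : ℝ} (hx : |x| < 1) :
    HasSum (fun n => ((2 * n - 1)‼ : ℝ) ^ 2 / ((2 * (n + 1))! : ℝ) * x ^ (2 * (n + 1)))
      (x * Real.arcsin x + √(1 - x ^ 2) - 1) := by
  have := hasSum_primitive (g := fun x => x * Real.arcsin x + √(1 - x ^ 2) - 1)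
    (fun n => div_nonneg (arcCoeff_nonneg n) (by positivity))
    (fun n => 2 * n + 1) (fun x hx => hasSum_arcsin hx) Real.continuous_arcsin.continuousOn
    (fun x hx => ?_) (by simp) hx
  · refine hasSum_of_eq this (fun n => ?_) rfl
    have h2 : (2 * (n + 1))! = (2 * n + 2) * ((2 * n + 1) * (2 * n)!) := by
      rw [show 2 * (n + 1) = 2 * n + 1 + 1 by ring, Nat.factorial_succ, Nat.factorial_succ]
    rw [arcCoeff, h2]
    have : ((2 * n)! : ℝ) ≠ 0 := by positivity
    push_cast
    field_simp
    ring
  · have hx2 : 0 < 1 - x ^ 2 := by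
      rw [sub_pos]; rwa [sq_lt_one_iff_abs_lt_one]
    have h1 := Real.hasDerivAt_arcsin (x := x) (by grind) (by grind)
    have h2 : HasDerivAt (fun x : ℝ => 1 - x ^ 2) (-(2 * x)) x := by
      simpa using ((hasDerivAt_pow 2 x).const_sub 1)
    refine ((((hasDerivAt_id x).mul h1).add (h2.sqrt hx2.ne')).sub_const 1).congr_deriv ?_
    have : √(1 - x ^ 2) ≠ 0 := by positivity
    simp only [id]
    field_simp
    ring

/-- The series of the theorem, obtained as `F(ρ) - 2 F(ρ/2)` from
`F(x) = x arcsin x + √(1 - x²) - 1`. -/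
lemma hasSum_closed_form {ρ : ℝ} (hρ : |ρ| < 1) :
    HasSum (fun n : ℕ => ((2 * n - 1)‼ : ℝ) ^ 2 / ((2 * (n + 1))! : ℝ) *
        (1 - ((2 : ℝ) ^ (2 * n + 1))⁻¹) * ρ ^ (2 * (n + 1)))
      (ρ * Real.arcsin ρ + √(1 - ρ ^ 2) - ρ * Real.arcsin (ρ / 2) - √(4 - ρ ^ 2) + 1) := by
  have h2 : |ρ / 2| < 1 := by rw [abs_div, abs_two]; linarith [abs_nonneg ρ]
  have hs : √(4 - ρ ^ 2) = 2 * √(1 - (ρ / 2) ^ 2) := by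
    rw [show 4 - ρ ^ 2 = 2 ^ 2 * (1 - (ρ / 2) ^ 2) by ring, Real.sqrt_mul (by norm_num),
      Real.sqrt_sq (by norm_num)]
  refine hasSum_of_eq
    ((hasSum_arcsin_primitive hρ).sub ((hasSum_arcsin_primitive h2).mul_left 2)) (fun n => ?_) ?_
  · rw [div_pow, show 2 * (n + 1) = 2 * n + 1 + 1 by ring, pow_succ (2 : ℝ) (2 * n + 1)]
    field_simp
  · rw [hs]; ring

/-! ### The characteristic function of the bivariate normal density -/

/-- The quadratic form satisfies `x² + y² - 2ρxy ≥ (1 - |ρ|)(x² + y²)`, so its exponential is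
dominated by a product of one-dimensional Gaussians. -/
lemma integrable_bvn_exp {ρ : ℝ} (hρ : |ρ| < 1) :
    Integrable fun z : ℝ × ℝ =>
      Real.exp (-(z.1 ^ 2 + z.2 ^ 2 - 2 * ρ * z.1 * z.2) / (2 * (1 - ρ ^ 2))) := by
  have hv : 0 < 1 - ρ ^ 2 := by rw [sub_pos]; rwa [sq_lt_one_iff_abs_lt_one]
  have hc : 0 < (1 - |ρ|) / (2 * (1 - ρ ^ 2)) := div_pos (by linarith) (by linarith)
  have hg := integrable_exp_neg_mul_sq hc
  refine (hg.mul_prod hg).mono' (by fun_prop) (Filter.Eventually.of_forall fun z => ?_)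
  rw [Real.norm_eq_abs, Real.abs_exp, ← Real.exp_add, Real.exp_le_exp]
  have hxy : 2 * ρ * z.1 * z.2 ≤ |ρ| * (z.1 ^ 2 + z.2 ^ 2) := by
    calc 2 * ρ * z.1 * z.2 = ρ * (2 * z.1 * z.2) := by ring
      _ ≤ |ρ| * |2 * z.1 * z.2| := by rw [← abs_mul]; exact le_abs_self _
      _ ≤ _ := by
        gcongr
        rw [abs_le]
        constructor <;> nlinarith [sq_nonneg (z.1 - z.2), sq_nonneg (z.1 + z.2)]
  calc _ ≤ -((1 - |ρ|) * (z.1 ^ 2 + z.2 ^ 2)) / (2 * (1 - ρ ^ 2)) := by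
        gcongr; linarith
    _ = _ := by ring

/-- The Gaussian integral with variance `v`, a complex linear term and a constant term. It serves
both steps of the iterated integral for the characteristic function. -/
lemma integral_bvn_inner {v : ℝ} (hv : 0 < v) (c : ℂ) (d : ℂ) :
    ∫ x : ℝ, Complex.exp (-(2 * v : ℂ)⁻¹ * x ^ 2 + c * x + d) =
      (√(2 * Real.pi * v) : ℝ) * Complex.exp (d + v * c ^ 2 / 2) := by
  have hv' : (v : ℂ) ≠ 0 := by exact_mod_cast hv.ne'
  rw [integral_cexp_quadratic]
  · congr 1
    · rw [Real.sqrt_eq_rpow, Complex.ofReal_cpow (by positivity)]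
      push_cast
      congr 1
      field_simp
    · congr 1
      field_simp
      ring
  · have : (-(2 * v : ℂ)⁻¹) = ((-(2 * v)⁻¹ : ℝ) : ℂ) := by push_cast; rfl
    rw [this, Complex.ofReal_re, neg_lt_zero]
    positivity

lemma jointCF_bvn {ρ : ℝ} (hρ : |ρ| < 1) (s t : ℝ) :
    jointCF₁ (bvnDensity ρ) s t =
      (Real.exp (-(s ^ 2 + t ^ 2 + 2 * ρ * s * t) / 2) : ℝ) := by
  have hv : 0 < 1 - ρ ^ 2 := by rw [sub_pos]; rwa [sq_lt_one_iff_abs_lt_one]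
  have hv' : (1 - ρ ^ 2 : ℂ) ≠ 0 := by exact_mod_cast hv.ne'
  have hint : Integrable fun z : ℝ × ℝ =>
      Complex.exp (Complex.I * (s * z.1 + t * z.2)) * (bvnDensity ρ z.1 z.2 : ℝ) := by
    have hd : Integrable fun z : ℝ × ℝ => ((bvnDensity ρ z.1 z.2 : ℝ) : ℂ) :=
      ((integrable_bvn_exp hρ).const_mul _).ofReal
    refine hd.bdd_mul (c := 1) (by fun_prop) (Filter.Eventually.of_forall fun z => ?_)
    rw [mul_comm, ← Complex.ofReal_mul, ← Complex.ofReal_mul, ← Complex.ofReal_add,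
      Complex.norm_exp_ofReal_mul_I]
  set K : ℝ := (2 * Real.pi)⁻¹ * (1 - ρ ^ 2) ^ (-(1/2 : ℝ)) with hK
  have hKv : K * √(2 * Real.pi * (1 - ρ ^ 2)) * √(2 * Real.pi * 1) = 1 := by
    rw [hK, Real.rpow_neg hv.le, ← Real.sqrt_eq_rpow, mul_one, Real.sqrt_mul (by positivity)]
    have h1 : √(1 - ρ ^ 2) ≠ 0 := by positivity
    have h2 : √(2 * Real.pi) * √(2 * Real.pi) = 2 * Real.pi := Real.mul_self_sqrt (by positivity)
    have h3 : (2 * Real.pi) ≠ 0 := by positivity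
    calc _ = (2 * Real.pi)⁻¹ * (√(2 * Real.pi) * √(2 * Real.pi)) * 
          ((√(1 - ρ ^ 2))⁻¹ * √(1 - ρ ^ 2)) := by ring
      _ = 1 := by rw [h2, inv_mul_cancel₀ h1, inv_mul_cancel₀ h3, one_mul]
  rw [jointCF₁, Measure.volume_eq_prod, integral_prod_symm _ hint]
  -- Integrating out `x` leaves a standard Gaussian in `y`, with linear term `i (t + ρ s) y`.
  have hinner : ∀ y : ℝ, ∫ x : ℝ, Complex.exp (Complex.I * (s * x + t * y)) *
        (bvnDensity ρ x y : ℝ) =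
      K * (√(2 * Real.pi * (1 - ρ ^ 2)) : ℝ) * Complex.exp (-(2 * (1 : ℝ) : ℂ)⁻¹ * y ^ 2 +
        (Complex.I * (t + ρ * s)) * y + (-(1 - ρ ^ 2) * s ^ 2 / 2)) := by
    intro y
    have := integral_bvn_inner hv (Complex.I * s + ρ * y / ((1 - ρ ^ 2 : ℝ) : ℂ))
      (Complex.I * t * y - y ^ 2 / (2 * ((1 - ρ ^ 2 : ℝ) : ℂ)))
    rw [mul_assoc, show Complex.exp (-(2 * (1 : ℝ) : ℂ)⁻¹ * y ^ 2 +
        (Complex.I * (t + ρ * s)) * y + (-(1 - ρ ^ 2) * s ^ 2 / 2)) =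
        Complex.exp (Complex.I * t * y - y ^ 2 / (2 * ((1 - ρ ^ 2 : ℝ) : ℂ)) +
        ((1 - ρ ^ 2 : ℝ) : ℂ) * (Complex.I * s + ρ * y / ((1 - ρ ^ 2 : ℝ) : ℂ)) ^ 2 / 2) from ?_,
      ← this, ← integral_const_mul]
    · congr 1 with x
      rw [bvnDensity, ← hK, Complex.ofReal_mul, Complex.ofReal_exp, mul_left_comm,
        ← Complex.exp_add]
      congr 2
      push_cast
      field_simp
      ring
    · congr 1
      push_cast
      field_simp
      ring_nf
      simp only [Complex.I_sq]
      ring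
  simp_rw [hinner]
  rw [integral_const_mul]
  have := integral_bvn_inner one_pos (Complex.I * (t + ρ * s)) (-(1 - ρ ^ 2) * s ^ 2 / 2)
  rw [this, ← mul_assoc, ← Complex.ofReal_mul, ← Complex.ofReal_mul, hKv, Complex.ofReal_one,
    one_mul, Complex.ofReal_exp]
  congr 1
  push_cast
  rw [mul_pow, Complex.I_sq]
  ring

/-- The numerator of the integrand in the distance covariance, in closed form. -/
lemma bvn_integrand {ρ : ℝ} (hρ : |ρ| < 1) (s t : ℝ) :
    ‖jointCF₁ (bvnDensity ρ) s t -
      jointCF₁ (bvnDensity ρ) s 0 * jointCF₁ (bvnDensity ρ) 0 t‖ ^ 2 =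
    Real.exp (-s ^ 2) * Real.exp (-t ^ 2) * (Real.exp (-(ρ * s * t)) - 1) ^ 2 := by
  rw [jointCF_bvn hρ, jointCF_bvn hρ, jointCF_bvn hρ, ← Complex.ofReal_mul, ← Complex.ofReal_sub,
    Complex.norm_real, Real.norm_eq_abs, sq_abs, ← Real.exp_add]
  have h1 : Real.exp (-s ^ 2) * Real.exp (-t ^ 2) = Real.exp (-(s ^ 2 + t ^ 2) / 2) ^ 2 := by
    rw [← Real.exp_add, ← Real.exp_nat_mul]; congr 1; push_cast; ring
  rw [h1, ← mul_pow, mul_sub, ← Real.exp_add]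
  congr 2
  · congr 1; ring
  · rw [mul_one]; congr 1; ring

/-! ### Even Gaussian moments and the distance covariance integral -/

lemma integrable_even_moment (n : ℕ) :
    Integrable fun x : ℝ => x ^ (2 * n) * Real.exp (-x ^ 2) := by
  have := integrable_rpow_mul_exp_neg_mul_sq one_pos (s := ((2 * n : ℕ) : ℝ))
    (by linarith [Nat.cast_nonneg (α := ℝ) (2 * n)])
  simpa only [Real.rpow_natCast, neg_one_mul] using this

lemma integral_even_moment (n : ℕ) :
    ∫ x : ℝ, x ^ (2 * n) * Real.exp (-x ^ 2) = (2 * n - 1)‼ * √Real.pi / 2 ^ n := by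
  have h0 : ∫ x in Set.Ioi (0 : ℝ), x ^ (2 * n) * Real.exp (-x ^ 2) =
      1 / 2 * Real.Gamma (n + 1 / 2) := by
    have := integral_rpow_mul_exp_neg_rpow (p := 2) (q := ((2 * n : ℕ) : ℝ)) two_pos
      (by linarith [Nat.cast_nonneg (α := ℝ) (2 * n)])
    simp only [Real.rpow_natCast, Real.rpow_two] at this
    rw [this]
    congr 2
    push_cast
    ring
  have h1 := integral_comp_abs (f := fun x : ℝ => x ^ (2 * n) * Real.exp (-x ^ 2))
  simp only [(even_two_mul n).pow_abs, sq_abs] at h1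
  rw [h1, h0, Real.Gamma_nat_add_half]
  ring

/-- The `n`-th term of the expansion of the symmetrized integrand
`e^{-s²-t²} (2 cosh 2u - 4 cosh u + 2) / (s² t²)`, `u = ρst`, in powers of `u`: the one with
`u²ⁿ⁺²`, where the factor `s² t²` has been cancelled (so that it is defined on the axes too). -/
noncomputable def symTerm (ρ : ℝ) (n : ℕ) (w : ℝ × ℝ) : ℝ :=
  ((2 * (2 ^ (2 * (n + 1)) - 2) / ((2 * (n + 1))! : ℝ)) * ρ ^ (2 * (n + 1))) *
    ((w.1 ^ (2 * n) * Real.exp (-w.1 ^ 2)) * (w.2 ^ (2 * n) * Real.exp (-w.2 ^ 2)))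

lemma symTerm_nonneg (ρ : ℝ) (n : ℕ) (w : ℝ × ℝ) : 0 ≤ symTerm ρ n w := by
  have h1 : (0 : ℝ) ≤ 2 ^ (2 * (n + 1)) - 2 := by
    have : (2 : ℝ) ^ 1 ≤ 2 ^ (2 * (n + 1)) := by
      gcongr
      · norm_num
      · omega
    linarith
  have h2 := (even_two_mul (n + 1)).pow_nonneg ρ
  have h3 := (even_two_mul n).pow_nonneg w.1
  have h4 := (even_two_mul n).pow_nonneg w.2
  unfold symTerm
  positivity

lemma integrable_symTerm (ρ : ℝ) (n : ℕ) : Integrable (symTerm ρ n) :=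
  ((integrable_even_moment n).mul_prod (integrable_even_moment n)).const_mul _

lemma integral_symTerm (ρ : ℝ) (n : ℕ) :
    ∫ w, symTerm ρ n w = 8 * Real.pi * (((2 * n - 1)‼ : ℝ) ^ 2 / ((2 * (n + 1))! : ℝ) *
        (1 - ((2 : ℝ) ^ (2 * n + 1))⁻¹) * ρ ^ (2 * (n + 1))) := by
  have h := integral_prod_mul (μ := (volume : Measure ℝ)) (ν := (volume : Measure ℝ))
    (fun x : ℝ => x ^ (2 * n) * Real.exp (-x ^ 2)) (fun x : ℝ => x ^ (2 * n) * Real.exp (-x ^ 2))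
  unfold symTerm
  rw [integral_const_mul, Measure.volume_eq_prod, h, integral_even_moment]
  have hpi : √Real.pi ^ 2 = Real.pi := Real.sq_sqrt Real.pi_pos.le
  have h2 : (2 : ℝ) ^ (2 * (n + 1)) = 4 * (2 ^ n) ^ 2 := by ring
  have h3 : (2 : ℝ) ^ (2 * n + 1) = 2 * (2 ^ n) ^ 2 := by ring
  rw [h2, h3]
  have : (2 : ℝ) ^ n ≠ 0 := by positivity
  field_simp
  rw [hpi]
  ring

/-- The integrand of the distance covariance of the bivariate normal distribution. On the axes it
is `0` by the convention for division by zero; these form a null set. -/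
noncomputable def bvnIntegrand (ρ : ℝ) (w : ℝ × ℝ) : ℝ :=
  Real.exp (-w.1 ^ 2) * Real.exp (-w.2 ^ 2) * (Real.exp (-(ρ * w.1 * w.2)) - 1) ^ 2 /
    (w.1 ^ 2 * w.2 ^ 2)

lemma bvnIntegrand_nonneg (ρ : ℝ) (w : ℝ × ℝ) : 0 ≤ bvnIntegrand ρ w := by
  unfold bvnIntegrand; positivity

lemma measurable_bvnIntegrand (ρ : ℝ) : Measurable (bvnIntegrand ρ) := by
  unfold bvnIntegrand; fun_prop

/-- The sum of the integrand and its reflection in the second variable has an expansion with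
nonnegative terms: reflecting cancels the odd powers of `ρst`. -/
lemma hasSum_symTerm (ρ : ℝ) {w : ℝ × ℝ} (h1 : w.1 ≠ 0) (h2 : w.2 ≠ 0) :
    HasSum (fun n => symTerm ρ n w) (bvnIntegrand ρ w + bvnIntegrand ρ (w.1, -w.2)) := by
  obtain ⟨s, t⟩ := w
  simp only at h1 h2
  set u := ρ * s * t with hu
  have hsum := ((Real.hasSum_cosh (2 * u)).mul_left 2).sub ((Real.hasSum_cosh u).mul_left 4)
  -- The constant term `2 - 4` of the cosh series cancels the `+ 2`, so the sum starts at `u²`.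
  rw [← hasSum_nat_add_iff' 1] at hsum
  have := hsum.mul_left (Real.exp (-s ^ 2) * Real.exp (-t ^ 2) / (s ^ 2 * t ^ 2))
  refine hasSum_of_eq this (fun n => ?_) ?_
  · simp only [symTerm]
    rw [hu]
    field_simp
    ring
  · simp only [bvnIntegrand, Finset.sum_range_one]
    rw [show -(ρ * s * -t) = u by rw [hu]; ring, ← hu, Real.cosh_eq, Real.cosh_eq,
      show 2 * u = u + u by ring, neg_add, Real.exp_add, Real.exp_add, Real.exp_neg]
    have := Real.exp_pos u
    simp
    field_simp
    ring

/-- Twice the integral is, by reflection invariance of Lebesgue measure, the integral of the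
symmetrized integrand, which is computed termwise. Working with the lower Lebesgue integral, no
integrability has to be known beforehand. -/
lemma lintegral_bvnIntegrand {ρ S : ℝ}
    (hS : HasSum (fun n : ℕ => ((2 * n - 1)‼ : ℝ) ^ 2 / ((2 * (n + 1))! : ℝ) *
        (1 - ((2 : ℝ) ^ (2 * n + 1))⁻¹) * ρ ^ (2 * (n + 1))) S) :
    ∫⁻ w, ENNReal.ofReal (bvnIntegrand ρ w) = ENNReal.ofReal (4 * Real.pi * S) := by
  have hS' := hS.mul_left (8 * Real.pi)
  simp_rw [← integral_symTerm] at hS'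
  have hmeas : Measurable fun w => ENNReal.ofReal (bvnIntegrand ρ w) :=
    (measurable_bvnIntegrand ρ).ennreal_ofReal
  have hrefl : ∫⁻ w : ℝ × ℝ, ENNReal.ofReal (bvnIntegrand ρ (w.1, -w.2)) =
      ∫⁻ w, ENNReal.ofReal (bvnIntegrand ρ w) :=
    ((MeasurePreserving.id (volume : Measure ℝ)).prod
      (Measure.measurePreserving_neg (volume : Measure ℝ))).lintegral_comp hmeas
  have hae : ∀ᵐ w : ℝ × ℝ, w.1 ≠ 0 ∧ w.2 ≠ 0 := by
    have h0 : ∀ᵐ x : ℝ, x ≠ 0 := Measure.ae_ne volume 0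
    exact (Measure.quasiMeasurePreserving_fst.ae h0).and (Measure.quasiMeasurePreserving_snd.ae h0)
  have key : (∫⁻ w, ENNReal.ofReal (bvnIntegrand ρ w)) + ∫⁻ w, ENNReal.ofReal (bvnIntegrand ρ w) =
      ENNReal.ofReal (8 * Real.pi * S) := by
    conv_lhs => enter [2]; rw [← hrefl]
    rw [← lintegral_add_left hmeas]
    calc _ = ∫⁻ w, ∑' n, ENNReal.ofReal (symTerm ρ n w) := by
          refine lintegral_congr_ae ?_
          filter_upwards [hae] with w hw
          have h := hasSum_symTerm ρ hw.1 hw.2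
          rw [← ENNReal.ofReal_add (bvnIntegrand_nonneg _ _) (bvnIntegrand_nonneg _ _),
            ← h.tsum_eq, ENNReal.ofReal_tsum_of_nonneg (fun n => symTerm_nonneg _ _ _) h.summable]
      _ = ∑' n, ENNReal.ofReal (∫ w, symTerm ρ n w) := by
          rw [lintegral_tsum fun n => (integrable_symTerm ρ n).aemeasurable.ennreal_ofReal]
          congr 1 with n
          rw [ofReal_integral_eq_lintegral_ofReal (integrable_symTerm ρ n)
            (Filter.Eventually.of_forall fun w => symTerm_nonneg _ _ _)]
      _ = _ := by
          rw [← hS'.tsum_eq, ENNReal.ofReal_tsum_of_nonneg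
            (fun n => integral_nonneg fun w => symTerm_nonneg _ _ _) hS'.summable]
  have hS0 : 0 ≤ 4 * Real.pi * S := by
    have : 0 ≤ 8 * Real.pi * S :=
      hS'.nonneg (fun n => integral_nonneg fun w => symTerm_nonneg _ _ _)
    linarith
  rw [show 8 * Real.pi * S = 4 * Real.pi * S + 4 * Real.pi * S by ring,
    ENNReal.ofReal_add hS0 hS0, ← two_mul, ← two_mul] at key
  exact (ENNReal.mul_right_inj two_ne_zero ENNReal.ofNat_ne_top).1 key

lemma dcov_bvn_eq {ρ S : ℝ} (hρ : |ρ| < 1)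
    (hS : HasSum (fun n : ℕ => ((2 * n - 1)‼ : ℝ) ^ 2 / ((2 * (n + 1))! : ℝ) *
        (1 - ((2 : ℝ) ^ (2 * n + 1))⁻¹) * ρ ^ (2 * (n + 1))) S) :
    dcov₁ (bvnDensity ρ) = 4 / Real.pi * S := by
  have hS0 : 0 ≤ 4 * Real.pi * S := by
    have := (hS.mul_left (8 * Real.pi)).nonneg (fun n => by
      rw [← integral_symTerm]; exact integral_nonneg fun w => symTerm_nonneg _ _ _)
    linarith
  simp only [dcov₁, bvn_integrand hρ]
  change _ * ∫ w, bvnIntegrand ρ w = _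
  rw [integral_eq_lintegral_of_nonneg_ae (Filter.Eventually.of_forall (bvnIntegrand_nonneg ρ))
    (measurable_bvnIntegrand ρ).aestronglyMeasurable, lintegral_bvnIntegrand hS,
    ENNReal.toReal_ofReal hS0]
  field_simp

/-- The series for the distance covariance of the bivariate normal distribution sums to the
closed form `(4/π)(ρ arcsin ρ + √(1−ρ²) − ρ arcsin(ρ/2) − √(4−ρ²) + 1)`, and consequently
`V²(X,Y)` equals this closed form. -/
theorem dcov_bivariate_normal_closed_form (ρ : ℝ) (hρ : ρ ∈ Set.Ioo (-1 : ℝ) 1) :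
    (4 / Real.pi * ∑' ℓ : ℕ,
        ((Nat.doubleFactorial (2 * (ℓ + 1) - 3) : ℝ) ^ 2 / (Nat.factorial (2 * (ℓ + 1)))) *
          (1 - ((2 : ℝ) ^ (2 * (ℓ + 1) - 1))⁻¹) * ρ ^ (2 * (ℓ + 1)) =
      4 / Real.pi * (ρ * Real.arcsin ρ + Real.sqrt (1 - ρ ^ 2) - ρ * Real.arcsin (ρ / 2) -
        Real.sqrt (4 - ρ ^ 2) + 1)) ∧
    dcov₁ (bvnDensity ρ) =
      4 / Real.pi * (ρ * Real.arcsin ρ + Real.sqrt (1 - ρ ^ 2) - ρ * Real.arcsin (ρ / 2) -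
        Real.sqrt (4 - ρ ^ 2) + 1) := by
  have hρ' : |ρ| < 1 := abs_lt.2 hρ
  refine ⟨?_, dcov_bvn_eq hρ' (hasSum_closed_form hρ')⟩
  exact congrArg _ (hasSum_closed_form hρ').tsum_eq
end

section
/- Let α ≥ β > 0 and λ ∈ (0,1), and let (X,Y) have the Sarmanov bivariate gamma density φ_{X,Y}(x,y) = φ_X(x) φ_Y(y) Σ_{n=0}^∞ a_n L_n^{(α−1)}(x) L_n^{(β−1)}(y) for x, y > 0, where a_n = [(β)_n/(α)_n]^{1/2} λ^n, φ_X(x) = x^{α−1} e^{−x}/Γ(α), φ_Y(y) = y^{β−1} e^{−y}/Γ(β). Then V²(X,Y) = 2^{2(2−α−β)} Σ_{j,k=1}^∞ a_j a_k A_{j,k}(α) A_{j,k}(β), where A_{j,k}(α) = 2^{−j−k} [ (α)_j (α)_k / (j! k!) ]^{1/2} · [Γ(2α + j + k − 1)/(Γ(α+j) Γ(α+k))] · ₂F₁(−j−k+2, 1−α−j; 2−2α−j−k; 2), and this double series converges absolutely for all α ≥ β > 0 and λ ∈ [0,1). -/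
/-!
The Fourier transform of `φ_X L_n^{(α-1)}` is elementary: from
`∫ x^j e^{isx} φ_X(x) dx = (α)_j (1 - is)^{-j} ψ(s)`, with `ψ` the gamma characteristic function,
the binomial theorem gives `((α)_n/n!)^{1/2} ψ(s) (1 - (1 - is)⁻¹)^n` (`lagDens_fourier`). Each
`φ_X L_n^{(α-1)}` has `L¹` norm at most `1` (it is a unit vector of `L²`), and `a_n ≤ λ^n` because
`β ≤ α`, so the Sarmanov expansion may be transformed termwise (`hasSum_jointCF`). All transforms
with `n ≥ 1` vanish at `s = 0`; hence `ψ_{X,Y}(s,t) - ψ_X(s) ψ_Y(t)` is the same series without its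
term `n = 0` (`jointCF_sub`).

Squaring this series and dividing by `s² t²` gives a double series of products of functions of `s`
and of `t` (`integrand_eq_tsum`). The bound `|1 - (1 - is)⁻¹| = |s| / (1 + s²)^{1/2} ≤ 1` shows that
the `(j,k)` term is at most `b_j b_k / ((1 + s²)(1 + t²))` with `b_n = (β)_n λ^n / n!`, and
`Σ b_n < ∞` because `λ < 1`. This justifies termwise integration and proves absolute convergence
(`summable_integral_norm_dcovTerm`).

It remains to evaluate the one-variable integrals. Since `|ψ(s)|² = (1 + s²)^{-α}`
(`gInt_normSq`), they are integrals of `(is)^{j+k-2} (1 - is)^{-(α+j)} (1 + is)^{-(α+k)}`. Expanding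
`is = 1 - (1 - is)` reduces them to Cauchy's beta integrals
`B(p,q) = ∫ (1 - is)^{-(α+p)} (1 + is)^{-(α+q)} ds`. Integration by parts gives
`2(α+p) B(p+1,q) = (2α+p+q-1) B(p,q)` (`cauchyB_rec`); together with `B(p,q) = B(q,p)` and the value
`B(1,1) = √π Γ(α+1/2)/Γ(α+1)` this determines every `B(p,q)` needed, and the terms of the binomial
expansion become those of the `₂F₁` polynomial (`integral_pow_cauchyK`). Only the modulus of `ψ` is
used, so no complex power with real exponent occurs.
-/

open MeasureTheory

/-- The rising factorial `(a)_n = a(a+1)⋯(a+n−1)`. -/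
noncomputable def poch (a : ℝ) (n : ℕ) : ℝ := (ascPochhammer ℝ n).eval a

/-- The orthonormal Laguerre polynomial
`L_n^{(α)}(x) = ((α+1)_n/n!)^{1/2} Σ_{j=0}^n (−n)_j x^j / ((α+1)_j j!)`. -/
noncomputable def laguerreFn (α : ℝ) (n : ℕ) (x : ℝ) : ℝ :=
  Real.sqrt (poch (α + 1) n / Nat.factorial n) *
    ∑ j ∈ Finset.range (n + 1),
      poch (-(n : ℝ)) j * x ^ j / (poch (α + 1) j * Nat.factorial j)

/-- The gamma density with shape parameter `α` (and unit scale). -/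
noncomputable def gammaDensity (α : ℝ) (x : ℝ) : ℝ :=
  if 0 < x then x ^ (α - 1) * Real.exp (-x) / Real.Gamma α else 0

/-- The terminating Gauss hypergeometric polynomial
`₂F₁(−m, b; c; z) = Σ_{ℓ=0}^m (−m)_ℓ (b)_ℓ z^ℓ/((c)_ℓ ℓ!)`. -/
noncomputable def hyp2F1Term (m : ℕ) (b c z : ℝ) : ℝ :=
  ∑ l ∈ Finset.range (m + 1),
    poch (-(m : ℝ)) l * poch b l * z ^ l / (poch c l * Nat.factorial l)

/-- The Lancaster coefficients `a_n = [(β)_n/(α)_n]^{1/2} λ^n` of the Sarmanov bivariate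
gamma distribution. -/
noncomputable def sarCoeff (α β lam : ℝ) (n : ℕ) : ℝ :=
  Real.sqrt (poch β n / poch α n) * lam ^ n

/-- The coefficient `A_{j,k}(α) = 2^{−j−k} [(α)_j (α)_k/(j!k!)]^{1/2}
 Γ(2α+j+k−1)/(Γ(α+j)Γ(α+k)) ₂F₁(−j−k+2, 1−α−j; 2−2α−j−k; 2)`. -/
noncomputable def sarA (α : ℝ) (j k : ℕ) : ℝ :=
  ((2 : ℝ) ^ (j + k))⁻¹ *
    Real.sqrt (poch α j * poch α k / ((Nat.factorial j : ℝ) * Nat.factorial k)) *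
    (Real.Gamma (2 * α + j + k - 1) / (Real.Gamma (α + j) * Real.Gamma (α + k))) *
    hyp2F1Term (j + k - 2) (1 - α - j) (2 - 2 * α - (j : ℝ) - k) 2

/-! ### Pochhammer symbols and Laguerre polynomials -/

theorem poch_zero (a : ℝ) : poch a 0 = 1 := by simp [poch]

theorem poch_succ (a : ℝ) (n : ℕ) : poch a (n + 1) = poch a n * (a + n) := by
  simp [poch, ascPochhammer_succ_eval]

theorem poch_pos {a : ℝ} (ha : 0 < a) (n : ℕ) : 0 < poch a n :=
  ascPochhammer_pos n a ha

theorem poch_mono {a b : ℝ} (ha : 0 < a) (hab : a ≤ b) (n : ℕ) : poch a n ≤ poch b n := by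
  induction n with
  | zero => simp [poch_zero]
  | succ n ih =>
    rw [poch_succ, poch_succ]
    have := poch_pos ha n
    gcongr
    exact (poch_pos (ha.trans_le hab) n).le

theorem poch_add (a : ℝ) (i j : ℕ) : poch a (j + i) = poch a j * poch (a + j) i := by
  induction i with
  | zero => simp [poch_zero]
  | succ i ih =>
    rw [← add_assoc, poch_succ, poch_succ, ih]
    push_cast
    ring

theorem Gamma_add_nat {a : ℝ} (ha : 0 < a) (n : ℕ) :
    Real.Gamma (a + n) = poch a n * Real.Gamma a := by
  induction n with
  | zero => simp [poch_zero]
  | succ n ih =>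
    have : a + (n + 1 : ℕ) = (a + n) + 1 := by push_cast; ring
    rw [this, Real.Gamma_add_one (by positivity), ih, poch_succ]
    ring

theorem poch_neg_nat (n j : ℕ) : poch (-(n : ℝ)) j = (-1) ^ j * n.choose j * j.factorial := by
  rw [poch, ascPochhammer_eval_neg_eq_descPochhammer, descPochhammer_eval_eq_descFactorial,
    Nat.descFactorial_eq_factorial_mul_choose]
  push_cast
  ring

/-- The normalising constant `((α)_n / n!)^{1/2}` of the Laguerre polynomial `L_n^{(α-1)}`. -/
noncomputable def lagNorm (α : ℝ) (n : ℕ) : ℝ := Real.sqrt (poch α n / Nat.factorial n)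

theorem lagNorm_nonneg (α : ℝ) (n : ℕ) : 0 ≤ lagNorm α n := Real.sqrt_nonneg _

theorem lagNorm_sq {α : ℝ} (hα : 0 < α) (n : ℕ) :
    lagNorm α n ^ 2 = poch α n / Nat.factorial n :=
  Real.sq_sqrt (div_nonneg (poch_pos hα n).le (by positivity))

/-- `L_n^{(α-1)}` with the Pochhammer symbols `(-n)_j` expanded into binomial coefficients. -/
theorem laguerreFn_eq (α : ℝ) (n : ℕ) (x : ℝ) :
    laguerreFn (α - 1) n x =
      lagNorm α n * ∑ j ∈ Finset.range (n + 1), (-1) ^ j * n.choose j / poch α j * x ^ j := by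
  unfold laguerreFn lagNorm
  rw [sub_add_cancel]
  congr 1
  refine Finset.sum_congr rfl fun j _ => ?_
  rw [poch_neg_nat]
  have : (j.factorial : ℝ) ≠ 0 := by positivity
  field_simp

/-- Finite-difference form of orthogonality: the polynomial `y ↦ (y)_i` is monic of degree `i`,
so its `n`-th difference vanishes for `i < n` and equals `n!` for `i = n`. -/
theorem sum_choose_poch (α : ℝ) {n i : ℕ} (hi : i ≤ n) :
    ∑ j ∈ Finset.range (n + 1), (-1) ^ j * n.choose j * poch (α + j) i =
      if i = n then (-1) ^ n * (n.factorial : ℝ) else 0 := by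
  have key : ∑ j ∈ Finset.range (n + 1), (-1) ^ j * n.choose j * poch (α + j) i =
      (-1) ^ n * (fwdDiff 1)^[n] (ascPochhammer ℝ i).eval α := by
    rw [fwdDiff_iter_eq_sum_shift, Finset.mul_sum]
    refine Finset.sum_congr rfl fun j hj => ?_
    have hj : j ≤ n := Nat.lt_succ_iff.mp (Finset.mem_range.mp hj)
    obtain ⟨d, rfl⟩ := Nat.exists_eq_add_of_le hj
    simp only [Nat.add_sub_cancel_left, zsmul_eq_mul, poch, nsmul_eq_mul, mul_one]
    push_cast
    have : ((-1 : ℝ) ^ d) * (-1) ^ d = 1 := by rw [← mul_pow]; simp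
    rw [pow_add]
    linear_combination (-(-1) ^ j * ((j + d).choose j : ℝ) *
      Polynomial.eval (α + j) (ascPochhammer ℝ i)) * this
  rw [key]
  have hdeg : (ascPochhammer ℝ i).natDegree = i := ascPochhammer_natDegree ℝ i
  split_ifs with h
  · subst h
    have := congrFun (Polynomial.fwdDiff_iter_degree_eq_factorial (ascPochhammer ℝ i)) α
    rw [hdeg] at this
    rw [this]
    simp [(monic_ascPochhammer ℝ i).leadingCoeff]
  · rw [Polynomial.fwdDiff_iter_eq_zero_of_degree_lt (by omega)]
    simp

/-- Algebraic core of `‖L_n^{(α-1)}‖ = 1`: the squared norm expanded through the gamma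
moments `(α)_{i+j}`. -/
theorem lag_norm_sum {α : ℝ} (hα : 0 < α) (n : ℕ) :
    lagNorm α n ^ 2 * ∑ i ∈ Finset.range (n + 1), ∑ j ∈ Finset.range (n + 1),
      ((-1) ^ i * n.choose i / poch α i) * ((-1) ^ j * n.choose j / poch α j) *
        poch α (i + j) = 1 := by
  have h1 : ∀ i ∈ Finset.range (n + 1), (∑ j ∈ Finset.range (n + 1),
      ((-1) ^ i * n.choose i / poch α i) * ((-1) ^ j * n.choose j / poch α j) *
        poch α (i + j)) = if i = n then (n.factorial : ℝ) / poch α n else 0 := by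
    intro i hi
    have hi : i ≤ n := Nat.lt_succ_iff.mp (Finset.mem_range.mp hi)
    have h2 : (∑ j ∈ Finset.range (n + 1),
      ((-1) ^ i * n.choose i / poch α i) * ((-1) ^ j * n.choose j / poch α j) *
        poch α (i + j)) = ((-1) ^ i * n.choose i / poch α i) *
        ∑ j ∈ Finset.range (n + 1), (-1) ^ j * n.choose j * poch (α + j) i := by
      rw [Finset.mul_sum]
      refine Finset.sum_congr rfl fun j _ => ?_
      rw [add_comm i j, poch_add]
      have := (poch_pos hα j).ne'
      field_simp
    rw [h2, sum_choose_poch α hi]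
    split_ifs with h
    · subst h
      have : ((-1 : ℝ) ^ i) * (-1) ^ i = 1 := by rw [← mul_pow]; simp
      have h0 := (poch_pos hα i).ne'
      simp only [Nat.choose_self, Nat.cast_one, mul_one]
      field_simp
      linear_combination this
    · simp
  rw [Finset.sum_congr rfl h1, Finset.sum_ite_eq' (Finset.range (n + 1)) n, lagNorm_sq hα,
    if_pos (by simp)]
  have := (poch_pos hα n).ne'
  have : (n.factorial : ℝ) ≠ 0 := by positivity
  field_simp

/-! ### The gamma integral with complex rate -/

/-- `∫₀^∞ x^{a-1} e^{-(1-is)x} dx`, the gamma integral with complex rate `1 - is`. -/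
noncomputable def gInt (a s : ℝ) : ℂ :=
  ∫ x in Set.Ioi (0 : ℝ), Complex.exp (-(1 - Complex.I * s) * x) * ((x ^ (a - 1) : ℝ) : ℂ)

theorem one_sub_I_ne (s : ℝ) : (1 - Complex.I * s : ℂ) ≠ 0 := by
  intro h
  simpa using congrArg Complex.re h

theorem one_add_I_ne (s : ℝ) : (1 + Complex.I * s : ℂ) ≠ 0 := by
  intro h
  simpa using congrArg Complex.re h

theorem normSq_one_sub_I (s : ℝ) : ‖(1 - Complex.I * s : ℂ)‖ ^ 2 = 1 + s ^ 2 := by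
  rw [← Complex.normSq_eq_norm_sq, Complex.normSq_apply]
  simp
  ring

theorem normSq_one_add_I (s : ℝ) : ‖(1 + Complex.I * s : ℂ)‖ ^ 2 = 1 + s ^ 2 := by
  rw [← Complex.normSq_eq_norm_sq, Complex.normSq_apply]
  simp
  ring

theorem norm_one_sub_I (s : ℝ) : ‖(1 - Complex.I * s : ℂ)‖ = Real.sqrt (1 + s ^ 2) := by
  rw [← normSq_one_sub_I, Real.sqrt_sq (norm_nonneg _)]

theorem norm_one_add_I (s : ℝ) : ‖(1 + Complex.I * s : ℂ)‖ = Real.sqrt (1 + s ^ 2) := by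
  rw [← normSq_one_add_I, Real.sqrt_sq (norm_nonneg _)]

theorem norm_gIntegrand (a s : ℝ) {x : ℝ} (hx : 0 < x) :
    ‖Complex.exp (-(1 - Complex.I * s) * x) * ((x ^ (a - 1) : ℝ) : ℂ)‖ =
      Real.exp (-x) * x ^ (a - 1) := by
  rw [norm_mul, Complex.norm_exp, Complex.norm_real, Real.norm_of_nonneg (by positivity)]
  simp

theorem gIntegrand_meas (a s : ℝ) : AEStronglyMeasurable
    (fun x : ℝ => Complex.exp (-(1 - Complex.I * s) * x) * ((x ^ (a - 1) : ℝ) : ℂ))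
    (volume.restrict (Set.Ioi 0)) := by
  refine Measurable.aestronglyMeasurable ?_
  fun_prop

theorem gIntegrand_integrable {a : ℝ} (ha : 0 < a) (s : ℝ) : IntegrableOn
    (fun x : ℝ => Complex.exp (-(1 - Complex.I * s) * x) * ((x ^ (a - 1) : ℝ) : ℂ))
    (Set.Ioi 0) := by
  refine (Real.GammaIntegral_convergent ha).mono' (gIntegrand_meas a s) ?_
  refine (ae_restrict_iff' measurableSet_Ioi).mpr (ae_of_all _ fun x hx => ?_)
  rw [norm_gIntegrand a s hx]

/-- The functional equation of the Gamma function for the complex rate `1 - is`. -/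
theorem gInt_succ {a : ℝ} (ha : 0 < a) (s : ℝ) :
    (1 - Complex.I * s) * gInt (a + 1) s = a * gInt a s := by
  have h0 : ∫ x in Set.Ioi (0 : ℝ),
      (a * (Complex.exp (-(1 - Complex.I * s) * x) * ((x ^ (a - 1) : ℝ) : ℂ)) -
      (1 - Complex.I * s) *
        (Complex.exp (-(1 - Complex.I * s) * x) * ((x ^ (a + 1 - 1) : ℝ) : ℂ))) =
      0 - Complex.exp (-(1 - Complex.I * s) * (0 : ℝ)) * (((0 : ℝ) ^ a : ℝ) : ℂ) := by
    refine integral_Ioi_of_hasDerivAt_of_tendsto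
      (f := fun x : ℝ => Complex.exp (-(1 - Complex.I * s) * x) * ((x ^ a : ℝ) : ℂ))
      ?_ ?_ ?_ ?_
    · refine ContinuousAt.continuousWithinAt (ContinuousAt.mul (by fun_prop) ?_)
      exact Complex.continuous_ofReal.continuousAt.comp
        (Real.continuousAt_rpow_const _ _ (Or.inr ha.le))
    · intro x hx
      have hx : (0 : ℝ) < x := hx
      have h1 : HasDerivAt (fun x : ℝ => (-(1 - Complex.I * s) * x : ℂ))
          (-(1 - Complex.I * s)) x := by
        simpa using (Complex.ofRealCLM.hasDerivAt (x := x)).const_mul (-(1 - Complex.I * s) : ℂ)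
      have h2 := (Real.hasDerivAt_rpow_const (x := x) (p := a) (Or.inl hx.ne')).ofReal_comp
      refine (h1.cexp.mul h2).congr_deriv ?_
      rw [add_sub_cancel_right]
      push_cast
      ring
    · exact ((gIntegrand_integrable ha s).const_mul _).sub
        ((gIntegrand_integrable (by linarith : 0 < a + 1) s).const_mul _)
    · rw [tendsto_zero_iff_norm_tendsto_zero]
      have h1 := tendsto_rpow_mul_exp_neg_mul_atTop_nhds_zero a 1 one_pos
      refine h1.congr' ?_
      filter_upwards [Filter.eventually_gt_atTop 0] with x hx
      have := norm_gIntegrand (a + 1) s hx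
      rw [add_sub_cancel_right] at this
      rw [this, mul_comm]
      simp
  rw [Real.zero_rpow ha.ne', Complex.ofReal_zero, mul_zero] at h0
  rw [integral_sub ((gIntegrand_integrable ha s).const_mul _)
        ((gIntegrand_integrable (by linarith : 0 < a + 1) s).const_mul _),
    integral_const_mul, integral_const_mul, sub_zero, sub_eq_zero] at h0
  exact h0.symm

theorem gInt_zero {a : ℝ} (ha : 0 < a) : gInt a 0 = Real.Gamma a := by
  rw [Real.Gamma_eq_integral ha, gInt, ← integral_complex_ofReal]
  refine integral_congr_ae (ae_of_all _ fun x => ?_)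
  simp

/-- Differentiation under the integral sign. -/
theorem gInt_hasDerivAt {a : ℝ} (ha : 0 < a) (s : ℝ) :
    HasDerivAt (gInt a) (Complex.I * gInt (a + 1) s) s := by
  have h := hasDerivAt_integral_of_dominated_loc_of_deriv_le
    (μ := volume.restrict (Set.Ioi (0 : ℝ))) (s := Set.univ) (x₀ := s)
    (F := fun (s x : ℝ) => Complex.exp (-(1 - Complex.I * s) * x) * ((x ^ (a - 1) : ℝ) : ℂ))
    (F' := fun (s x : ℝ) => Complex.I *
      (Complex.exp (-(1 - Complex.I * s) * x) * ((x ^ (a + 1 - 1) : ℝ) : ℂ)))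
    (bound := fun x => Real.exp (-x) * x ^ (a + 1 - 1)) Filter.univ_mem
    (Filter.Eventually.of_forall fun s => gIntegrand_meas a s)
    (gIntegrand_integrable ha s) ((gIntegrand_meas (a + 1) s).const_mul _) ?_
    (Real.GammaIntegral_convergent (by linarith)) ?_
  · have h2 := h.2
    rw [integral_const_mul] at h2
    exact h2
  · refine (ae_restrict_iff' measurableSet_Ioi).mpr (ae_of_all _ fun x hx t _ => ?_)
    rw [norm_mul, norm_gIntegrand _ t hx]
    simp
  · refine (ae_restrict_iff' measurableSet_Ioi).mpr (ae_of_all _ fun x hx t _ => ?_)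
    have hx : (0 : ℝ) < x := hx
    have h1 : HasDerivAt (fun t : ℝ => (-(1 - Complex.I * t) * x : ℂ)) (Complex.I * x) t := by
      have := (((Complex.ofRealCLM.hasDerivAt (x := t)).const_mul Complex.I).const_sub 1).neg.mul_const
        (x : ℂ)
      simpa using this
    refine (h1.cexp.mul_const ((x ^ (a - 1) : ℝ) : ℂ)).congr_deriv ?_
    have : x ^ (a + 1 - 1) = x * x ^ (a - 1) := by
      rw [show a + 1 - 1 = 1 + (a - 1) by ring, Real.rpow_add hx, Real.rpow_one]
    rw [this]
    push_cast
    ring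

/-- The gamma characteristic function satisfies `|φ(s)|² = (1 + s²)^{-a}`: the derivative of
`|gInt a s|² (1 + s²)^a` vanishes. -/
theorem gInt_normSq {a : ℝ} (ha : 0 < a) (s : ℝ) :
    gInt a s * (starRingEnd ℂ) (gInt a s) =
      ((Real.Gamma a ^ 2 * (1 + s ^ 2) ^ (-a) : ℝ) : ℂ) := by
  have hpos : ∀ t : ℝ, 0 < 1 + t ^ 2 := fun t => by positivity
  have hd : ∀ t : ℝ, HasDerivAt (fun t : ℝ => gInt a t * (starRingEnd ℂ) (gInt a t) *
      (((1 + t ^ 2) ^ a : ℝ) : ℂ)) 0 t := by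
    intro t
    have h1 := gInt_hasDerivAt ha t
    have h2 : HasDerivAt (fun t => (starRingEnd ℂ) (gInt a t))
      ((starRingEnd ℂ) (Complex.I * gInt (a + 1) t)) t := h1.star
    have h3 : HasDerivAt (fun t : ℝ => (1 + t ^ 2) ^ a) (2 * t * a * (1 + t ^ 2) ^ (a - 1)) t := by
      have := ((hasDerivAt_pow 2 t).const_add 1).rpow_const (p := a) (Or.inl (hpos t).ne')
      simpa using this
    refine ((h1.mul h2).mul h3.ofReal_comp).congr_deriv ?_
    have h5 : gInt (a + 1) t = a * gInt a t / (1 - Complex.I * t) := by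
      rw [← gInt_succ ha t]; field_simp [one_sub_I_ne t]
    have h6 : (1 + t ^ 2) ^ a = (1 + t ^ 2) ^ (a - 1) * (1 + t ^ 2) := by
      rw [← Real.rpow_add_one (hpos t).ne', sub_add_cancel]
    have h7 : (1 + (t : ℂ) ^ 2) = (1 - Complex.I * t) * (1 + Complex.I * t) := by
      linear_combination (t : ℂ) ^ 2 * Complex.I_sq
    rw [h5, h6]
    have hp := one_add_I_ne t
    have hm := one_sub_I_ne t
    simp only [map_mul, map_div₀, map_sub, map_one, Complex.conj_I, Complex.conj_ofReal]
    push_cast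
    rw [h7]
    simp only [Pi.mul_apply, neg_mul, sub_neg_eq_add]
    field_simp
    linear_combination (2 * (t : ℂ) * a * gInt a t * (starRingEnd ℂ) (gInt a t) *
      (((1 + t ^ 2) ^ (a - 1) : ℝ) : ℂ)) * Complex.I_sq
  have hc := is_const_of_deriv_eq_zero (fun t => (hd t).differentiableAt)
    (fun t => (hd t).deriv) s 0
  simp only [gInt_zero ha] at hc
  have hs : (((1 + s ^ 2) ^ a : ℝ) : ℂ) * (((1 + s ^ 2) ^ (-a) : ℝ) : ℂ) = 1 := by
    rw [← Complex.ofReal_mul, ← Real.rpow_add (hpos s)]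
    simp
  calc gInt a s * (starRingEnd ℂ) (gInt a s)
      = (gInt a s * (starRingEnd ℂ) (gInt a s) * (((1 + s ^ 2) ^ a : ℝ) : ℂ)) *
          (((1 + s ^ 2) ^ (-a) : ℝ) : ℂ) := by rw [mul_assoc, hs, mul_one]
    _ = _ := by
      rw [hc]
      simp [sq]

/-! ### Fourier transforms of gamma-weighted Laguerre polynomials -/

theorem gammaDensity_nonneg {α : ℝ} (hα : 0 < α) (x : ℝ) : 0 ≤ gammaDensity α x := by
  unfold gammaDensity
  split_ifs with h
  · have := Real.Gamma_pos_of_pos hα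
    positivity
  · rfl

theorem gammaDensity_moment_indicator {α : ℝ} (s : ℝ) (j : ℕ) :
    (fun x : ℝ => Complex.exp (Complex.I * (s * x)) * ((gammaDensity α x * x ^ j : ℝ) : ℂ)) =
    (Set.Ioi (0 : ℝ)).indicator (fun x => (Real.Gamma α : ℂ)⁻¹ *
      (Complex.exp (-(1 - Complex.I * s) * x) * ((x ^ (α + j - 1) : ℝ) : ℂ))) := by
  funext x
  by_cases hx : 0 < x
  · rw [Set.indicator_of_mem (show x ∈ Set.Ioi 0 from hx), gammaDensity, if_pos hx]
    have h1 : x ^ (α + j - 1) = x ^ (α - 1) * x ^ j := by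
      rw [show α + j - 1 = α - 1 + j by ring, Real.rpow_add hx, Real.rpow_natCast]
    have h2 : Complex.exp (-(1 - Complex.I * s) * x) =
        Complex.exp (Complex.I * (s * x)) * Complex.exp (-x) := by
      rw [← Complex.exp_add]
      congr 1
      ring
    rw [h1, h2]
    push_cast
    ring
  · rw [Set.indicator_of_notMem (show x ∉ Set.Ioi 0 from hx), gammaDensity, if_neg hx]
    simp

theorem gammaDensity_moment_integrable {α : ℝ} (hα : 0 < α) (s : ℝ) (j : ℕ) :
    Integrable (fun x : ℝ =>
      Complex.exp (Complex.I * (s * x)) * ((gammaDensity α x * x ^ j : ℝ) : ℂ)) := by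
  rw [gammaDensity_moment_indicator, integrable_indicator_iff measurableSet_Ioi]
  exact (gIntegrand_integrable (by positivity) s).const_mul _

/-- The characteristic function of the gamma density, i.e. `(1 - is)^{-α}`. -/
noncomputable def gCF (α s : ℝ) : ℂ := gInt α s / Real.Gamma α

/-- `E[X^j e^{isX}] = (α)_j (1 - is)^{-j} φ(s)` for a gamma variable `X`. -/
theorem gammaDensity_moment {α : ℝ} (hα : 0 < α) (s : ℝ) (j : ℕ) :
    ∫ x : ℝ, Complex.exp (Complex.I * (s * x)) * ((gammaDensity α x * x ^ j : ℝ) : ℂ) =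
      poch α j * ((1 - Complex.I * s)⁻¹) ^ j * gCF α s := by
  rw [gammaDensity_moment_indicator, integral_indicator measurableSet_Ioi, integral_const_mul]
  change _ * gInt (α + j) s = _
  have h : gInt (α + j) s = poch α j * ((1 - Complex.I * s)⁻¹) ^ j * gInt α s := by
    induction j with
    | zero => simp [poch_zero]
    | succ j ih =>
      have h1 := gInt_succ (a := α + j) (by positivity) s
      rw [ih] at h1
      have hm := one_sub_I_ne s
      have h2 : gInt (α + (j + 1 : ℕ)) s =
          (1 - Complex.I * s)⁻¹ * ((1 - Complex.I * s) * gInt (α + j + 1) s) := by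
        rw [inv_mul_cancel_left₀ hm]
        push_cast
        rw [add_assoc]
      rw [h2, h1, poch_succ]
      push_cast
      ring
  rw [h, gCF]
  ring

theorem gCF_zero {α : ℝ} (hα : 0 < α) : gCF α 0 = 1 := by
  have : (Real.Gamma α : ℂ) ≠ 0 := by exact_mod_cast (Real.Gamma_pos_of_pos hα).ne'
  rw [gCF, gInt_zero hα, div_self this]

theorem gCF_normSq {α : ℝ} (hα : 0 < α) (s : ℝ) :
    gCF α s * (starRingEnd ℂ) (gCF α s) = (((1 + s ^ 2) ^ (-α) : ℝ) : ℂ) := by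
  have h0 : (Real.Gamma α : ℂ) ≠ 0 := by exact_mod_cast (Real.Gamma_pos_of_pos hα).ne'
  have := gInt_normSq hα s
  rw [gCF, map_div₀, Complex.conj_ofReal, div_mul_div_comm, this]
  push_cast
  field_simp

/-- The gamma-weighted Laguerre polynomial `φ_X L_n^{(α-1)}`. -/
noncomputable def lagDens (α : ℝ) (n : ℕ) (x : ℝ) : ℝ := gammaDensity α x * laguerreFn (α - 1) n x

/-- The Fourier transform of `lagDens`, see `lagDens_fourier`. -/
noncomputable def lagCF (α : ℝ) (n : ℕ) (s : ℝ) : ℂ :=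
  lagNorm α n * gCF α s * (1 - (1 - Complex.I * s)⁻¹) ^ n

theorem lagDens_fourier_expand (α : ℝ) (n : ℕ) (s x : ℝ) :
    Complex.exp (Complex.I * (s * x)) * (lagDens α n x : ℂ) =
    ∑ j ∈ Finset.range (n + 1), ((lagNorm α n * ((-1) ^ j * n.choose j / poch α j) : ℝ) : ℂ) *
      (Complex.exp (Complex.I * (s * x)) * ((gammaDensity α x * x ^ j : ℝ) : ℂ)) := by
  rw [lagDens, laguerreFn_eq]
  push_cast
  rw [Finset.mul_sum, Finset.mul_sum, Finset.mul_sum]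
  refine Finset.sum_congr rfl fun j _ => ?_
  ring

theorem lagDens_fourier_integrable {α : ℝ} (hα : 0 < α) (n : ℕ) (s : ℝ) :
    Integrable (fun x : ℝ => Complex.exp (Complex.I * (s * x)) * (lagDens α n x : ℂ)) := by
  simp_rw [lagDens_fourier_expand]
  exact integrable_finsetSum _ fun j _ => (gammaDensity_moment_integrable hα s j).const_mul _

/-- The Fourier transform of `φ_X L_n^{(α-1)}`: termwise integration yields the binomial expansion
of `(1 - (1 - is)⁻¹)^n`. -/
theorem lagDens_fourier {α : ℝ} (hα : 0 < α) (n : ℕ) (s : ℝ) :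
    ∫ x : ℝ, Complex.exp (Complex.I * (s * x)) * (lagDens α n x : ℂ) = lagCF α n s := by
  simp_rw [lagDens_fourier_expand]
  rw [integral_finsetSum _ fun j _ => (gammaDensity_moment_integrable hα s j).const_mul _]
  simp_rw [integral_const_mul, gammaDensity_moment hα]
  rw [lagCF, sub_eq_neg_add 1 (1 - Complex.I * (s : ℂ))⁻¹, add_pow, Finset.mul_sum]
  refine Finset.sum_congr rfl fun j _ => ?_
  have : (poch α j : ℂ) ≠ 0 := by exact_mod_cast (poch_pos hα j).ne'
  push_cast
  rw [neg_pow (1 - Complex.I * (s : ℂ))⁻¹, one_pow]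
  field_simp

theorem lagDens_integrable {α : ℝ} (hα : 0 < α) (n : ℕ) : Integrable (lagDens α n) := by
  have := (lagDens_fourier_integrable hα n 0).re
  simpa using this

theorem gammaDensity_moment_real {α : ℝ} (hα : 0 < α) (j : ℕ) :
    Integrable (fun x : ℝ => gammaDensity α x * x ^ j) ∧
      ∫ x : ℝ, gammaDensity α x * x ^ j = poch α j := by
  constructor
  · have := (gammaDensity_moment_integrable hα 0 j).re
    simpa [← Complex.ofReal_pow] using this
  · have := gammaDensity_moment hα 0 j
    simp only [Complex.ofReal_zero, zero_mul, mul_zero, Complex.exp_zero, one_mul, sub_zero,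
      inv_one, one_pow, mul_one, gCF_zero hα, integral_complex_ofReal] at this
    exact_mod_cast this

/-- `L_n^{(α-1)}` is a unit vector in `L²` of the gamma distribution. -/
theorem laguerre_sq_integral {α : ℝ} (hα : 0 < α) (n : ℕ) :
    Integrable (fun x : ℝ => gammaDensity α x * laguerreFn (α - 1) n x ^ 2) ∧
      ∫ x : ℝ, gammaDensity α x * laguerreFn (α - 1) n x ^ 2 = 1 := by
  have hexp : ∀ x : ℝ, gammaDensity α x * laguerreFn (α - 1) n x ^ 2 =
      lagNorm α n ^ 2 * ∑ i ∈ Finset.range (n + 1), ∑ j ∈ Finset.range (n + 1),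
      ((-1) ^ i * n.choose i / poch α i) * ((-1) ^ j * n.choose j / poch α j) *
        (gammaDensity α x * x ^ (i + j)) := by
    intro x
    rw [laguerreFn_eq, mul_pow, sq (∑ j ∈ _, _), Finset.sum_mul_sum, mul_left_comm, Finset.mul_sum]
    congr 1
    refine Finset.sum_congr rfl fun i _ => ?_
    rw [Finset.mul_sum]
    refine Finset.sum_congr rfl fun j _ => ?_
    rw [pow_add]
    ring
  have hint : ∀ i j : ℕ, Integrable (fun x : ℝ =>
      ((-1) ^ i * n.choose i / poch α i) * ((-1) ^ j * n.choose j / poch α j) *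
        (gammaDensity α x * x ^ (i + j))) := fun i j =>
    (gammaDensity_moment_real hα (i + j)).1.const_mul _
  simp_rw [hexp]
  constructor
  · exact (integrable_finsetSum _ fun i _ => integrable_finsetSum _ fun j _ =>
      hint i j).const_mul _
  · rw [integral_const_mul, integral_finsetSum _ fun i _ => integrable_finsetSum _ fun j _ =>
      hint i j]
    refine Eq.trans ?_ (lag_norm_sum hα n)
    congr 1
    refine Finset.sum_congr rfl fun i _ => ?_
    rw [integral_finsetSum _ fun j _ => hint i j]
    refine Finset.sum_congr rfl fun j _ => ?_
    rw [integral_const_mul, (gammaDensity_moment_real hα (i + j)).2]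

/-- Uniform `L¹` bound that justifies integrating the Sarmanov expansion termwise. -/
theorem lagDens_L1 {α : ℝ} (hα : 0 < α) (n : ℕ) : ∫ x : ℝ, ‖lagDens α n x‖ ≤ 1 := by
  obtain ⟨h1, h2⟩ := laguerre_sq_integral hα n
  obtain ⟨h3, h4⟩ := gammaDensity_moment_real hα 0
  simp only [pow_zero, mul_one, poch_zero] at h3 h4
  -- `|L| ≤ (1 + L²) / 2`, and both halves integrate to `1 / 2` against the gamma density
  calc ∫ x : ℝ, ‖lagDens α n x‖
      ≤ ∫ x : ℝ, (1 / 2 * gammaDensity α x +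
          1 / 2 * (gammaDensity α x * laguerreFn (α - 1) n x ^ 2)) := by
        refine integral_mono (lagDens_integrable hα n).norm
          ((h3.const_mul _).add (h1.const_mul _)) fun x => ?_
        have hg := gammaDensity_nonneg hα x
        simp only [lagDens, norm_mul, Real.norm_eq_abs, abs_of_nonneg hg]
        have : |laguerreFn (α - 1) n x| ≤ 1 / 2 + 1 / 2 * laguerreFn (α - 1) n x ^ 2 := by
          rw [← sq_abs (laguerreFn (α - 1) n x)]
          nlinarith [sq_nonneg (|laguerreFn (α - 1) n x| - 1)]
        nlinarith
    _ = 1 := by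
        rw [integral_add (h3.const_mul _) (h1.const_mul _), integral_const_mul,
          integral_const_mul, h2, h4]
        norm_num

/-! ### Cauchy's beta integral: recurrence -/

/-- `∫ (1 + s²)^{-c} ds = √π Γ(c - 1/2) / Γ(c)`, by writing `(1 + s²)^{-c}` as a gamma integral
and integrating the Gaussian in `s` first. -/
theorem integral_one_add_sq_rpow {c : ℝ} (hc : 1 / 2 < c) :
    ∫ s : ℝ, (1 + s ^ 2) ^ (-c) = Real.sqrt Real.pi * Real.Gamma (c - 1 / 2) / Real.Gamma c := by
  have hc0 : 0 < c := by linarith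
  have hG := Real.Gamma_pos_of_pos hc0
  have h1 : ∀ s : ℝ, ∫ x in Set.Ioi (0 : ℝ), x ^ (c - 1) * Real.exp (-((1 + s ^ 2) * x)) =
      (1 + s ^ 2) ^ (-c) * Real.Gamma c := by
    intro s
    have hs : 0 < 1 + s ^ 2 := by positivity
    rw [Real.integral_rpow_mul_exp_neg_mul_Ioi hc0 hs, one_div, Real.inv_rpow hs.le,
      Real.rpow_neg hs.le]
  have h2 : ∀ x : ℝ, 0 < x → ∫ s : ℝ, x ^ (c - 1) * Real.exp (-((1 + s ^ 2) * x)) =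
      Real.sqrt Real.pi * (Real.exp (-x) * x ^ (c - 1 / 2 - 1)) := by
    intro x hx
    have h3 : ∀ s : ℝ, x ^ (c - 1) * Real.exp (-((1 + s ^ 2) * x)) =
        x ^ (c - 1) * Real.exp (-x) * Real.exp (-x * s ^ 2) := by
      intro s
      rw [mul_assoc, ← Real.exp_add]
      congr 2
      ring
    simp_rw [h3]
    rw [integral_const_mul, integral_gaussian, Real.sqrt_div Real.pi_pos.le,
      show c - 1 / 2 - 1 = c - 1 - 1 / 2 by ring, Real.rpow_sub hx (c - 1) (1 / 2),
      Real.sqrt_eq_rpow x]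
    ring
  have hmeas : AEStronglyMeasurable
      (Function.uncurry fun (s x : ℝ) => x ^ (c - 1) * Real.exp (-((1 + s ^ 2) * x)))
      (volume.prod (volume.restrict (Set.Ioi 0))) := by
    refine Measurable.aestronglyMeasurable ?_
    unfold Function.uncurry
    fun_prop
  have hint : Integrable
      (Function.uncurry fun (s x : ℝ) => x ^ (c - 1) * Real.exp (-((1 + s ^ 2) * x)))
      (volume.prod (volume.restrict (Set.Ioi 0))) := by
    rw [integrable_prod_iff' hmeas]
    constructor
    · refine (ae_restrict_iff' measurableSet_Ioi).mpr (ae_of_all _ fun x hx => ?_)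
      have hx : (0 : ℝ) < x := hx
      refine Integrable.of_integral_ne_zero ?_
      simp only [Function.uncurry]
      rw [h2 x hx]
      have := Real.pi_pos
      positivity
    · refine ((Real.GammaIntegral_convergent (by linarith : 0 < c - 1 / 2)).const_mul
        (Real.sqrt Real.pi)).congr ?_
      refine (ae_restrict_iff' measurableSet_Ioi).mpr (ae_of_all _ fun x hx => ?_)
      have hx : (0 : ℝ) < x := hx
      simp only [Function.uncurry]
      rw [← h2 x hx]
      refine integral_congr_ae (ae_of_all _ fun s => ?_)
      simp only
      rw [Real.norm_of_nonneg (by positivity)]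
  have h4 := integral_integral_swap hint
  simp_rw [h1] at h4
  rw [integral_mul_const, setIntegral_congr_fun measurableSet_Ioi (fun x hx => h2 x hx),
    integral_const_mul, ← Real.Gamma_eq_integral (by linarith)] at h4
  rw [← h4]
  field_simp

theorem one_add_sq_rpow_integrable {c : ℝ} (hc : 1 / 2 < c) :
    Integrable (fun s : ℝ => (1 + s ^ 2) ^ (-c)) := by
  have := integrable_rpow_neg_one_add_norm_sq (E := ℝ) (μ := volume) (r := 2 * c)
    (by simp; linarith)
  refine this.congr (ae_of_all _ fun s => ?_)
  simp only [Real.norm_eq_abs, sq_abs]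
  congr 1
  ring

/-- The Cauchy beta integrand `(1 - is)^{-(α+p)} (1 + is)^{-(α+q)}` for integers `p`, `q`; keeping
the modulus `(1 + s²)^{-α}` apart leaves only integer powers of complex numbers. -/
noncomputable def cauchyK (α : ℝ) (p q : ℤ) (s : ℝ) : ℂ :=
  (((1 + s ^ 2) ^ (-α) : ℝ) : ℂ) * (1 - Complex.I * s) ^ (-p) * (1 + Complex.I * s) ^ (-q)

theorem norm_cauchyK (α : ℝ) (p q : ℤ) (s : ℝ) :
    ‖cauchyK α p q s‖ = (1 + s ^ 2) ^ (-(α + (p + q) / 2)) := by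
  have hs : 0 < 1 + s ^ 2 := by positivity
  rw [cauchyK, norm_mul, norm_mul, norm_zpow, norm_zpow, norm_one_sub_I, norm_one_add_I,
    Complex.norm_real, Real.norm_of_nonneg (by positivity), mul_assoc,
    ← zpow_add₀ (Real.sqrt_pos.mpr hs).ne', Real.sqrt_eq_rpow, ← Real.rpow_intCast,
    ← Real.rpow_mul hs.le, ← Real.rpow_add hs]
  congr 1
  push_cast
  ring

theorem cauchyK_continuous (α : ℝ) (p q : ℤ) : Continuous (cauchyK α p q) := by
  unfold cauchyK
  refine Continuous.mul (Continuous.mul ?_ ?_) ?_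
  · refine Complex.continuous_ofReal.comp (Continuous.rpow_const (by fun_prop) fun s => Or.inl ?_)
    positivity
  · exact Continuous.zpow₀ (by fun_prop) _ fun s => Or.inl (one_sub_I_ne s)
  · exact Continuous.zpow₀ (by fun_prop) _ fun s => Or.inl (one_add_I_ne s)

theorem cauchyK_integrable {α : ℝ} {p q : ℤ} (h : 1 < 2 * α + p + q) :
    Integrable (cauchyK α p q) := by
  refine (one_add_sq_rpow_integrable (c := α + (p + q) / 2) (by linarith)).mono'
    (cauchyK_continuous α p q).aestronglyMeasurable (ae_of_all _ fun s => ?_)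
  rw [norm_cauchyK]

theorem one_add_sq_tendsto {c : ℝ} (hc : 0 < c) (l : Filter ℝ)
    (hl : Filter.Tendsto (fun s : ℝ => 1 + s ^ 2) l Filter.atTop) :
    Filter.Tendsto (fun s : ℝ => (1 + s ^ 2) ^ (-c)) l (nhds 0) :=
  (tendsto_rpow_neg_atTop hc).comp hl

/-- Up to a factor `I`, the derivative is the combination of integrands whose vanishing integral
is the recurrence `cauchyB_rec`. -/
theorem cauchyK_hasDerivAt (α : ℝ) (p q : ℤ) (s : ℝ) :
    HasDerivAt (cauchyK α p (q - 1))
      (Complex.I * (2 * (α + p) * cauchyK α (p + 1) q s -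
        (2 * α + p + q - 1) * cauchyK α p q s)) s := by
  have hs : 0 < 1 + s ^ 2 := by positivity
  have hm := one_sub_I_ne s
  have hp := one_add_I_ne s
  have h1 : HasDerivAt (fun s : ℝ => (((1 + s ^ 2) ^ (-α) : ℝ) : ℂ))
      ((2 * s * (-α) * (1 + s ^ 2) ^ (-α - 1) : ℝ) : ℂ) s := by
    have := ((hasDerivAt_pow 2 s).const_add 1).rpow_const (p := -α) (Or.inl hs.ne')
    refine HasDerivAt.ofReal_comp ?_
    simpa using this
  have h2 : HasDerivAt (fun s : ℝ => (1 - Complex.I * s : ℂ)) (-Complex.I) s := by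
    simpa using ((Complex.ofRealCLM.hasDerivAt (x := s)).const_mul Complex.I).const_sub 1
  have h3 : HasDerivAt (fun s : ℝ => (1 + Complex.I * s : ℂ)) Complex.I s := by
    simpa using ((Complex.ofRealCLM.hasDerivAt (x := s)).const_mul Complex.I).const_add 1
  have h4 := (hasDerivAt_zpow (-p) _ (Or.inl hm)).comp s h2
  have h5 := (hasDerivAt_zpow (-(q - 1)) _ (Or.inl hp)).comp s h3
  refine ((h1.mul h4).mul h5).congr_deriv ?_
  have h6 : (1 + s ^ 2) ^ (-α) = (1 + s ^ 2) ^ (-α - 1) * (1 + s ^ 2) := by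
    rw [← Real.rpow_add_one hs.ne', sub_add_cancel]
  have h7 : (1 + (s : ℂ) ^ 2) = (1 - Complex.I * s) * (1 + Complex.I * s) := by
    linear_combination (s : ℂ) ^ 2 * Complex.I_sq
  simp only [cauchyK, Pi.mul_apply, Function.comp, h6]
  rw [show -(q - 1) - 1 = -q by ring, show -(q - 1) = -q + 1 by ring, zpow_add_one₀ hp,
    show -p = (-(p + 1)) + 1 by ring, zpow_add_one₀ hm, show -(p + 1) + 1 - 1 = -(p + 1) by ring]
  push_cast
  rw [h7]
  generalize (1 - Complex.I * (s : ℂ)) ^ (-(p + 1)) = A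
  generalize (1 + Complex.I * (s : ℂ)) ^ (-q) = B
  generalize (((1 + s ^ 2) ^ (-α - 1) : ℝ) : ℂ) = C
  have hI : Complex.I ^ 3 = -Complex.I := by rw [pow_succ, Complex.I_sq]; ring
  have hI4 : Complex.I ^ 4 = 1 := by rw [pow_succ, hI]; simp
  ring_nf
  simp only [Complex.I_sq, hI, hI4]
  ring

/-- The Cauchy beta integral `∫ (1 - is)^{-(α+p)} (1 + is)^{-(α+q)} ds`. -/
noncomputable def cauchyB (α : ℝ) (p q : ℤ) : ℂ := ∫ s : ℝ, cauchyK α p q s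

/-- Integration by parts for the Cauchy beta integral. -/
theorem cauchyB_rec {α : ℝ} {p q : ℤ} (h : 1 < 2 * α + p + q) :
    2 * (α + p) * cauchyB α (p + 1) q = (2 * α + p + q - 1) * cauchyB α p q := by
  have hi1 : Integrable (cauchyK α (p + 1) q) := cauchyK_integrable (by push_cast; linarith)
  have hi2 := cauchyK_integrable h
  have hlim : ∀ l : Filter ℝ, Filter.Tendsto (fun s : ℝ => 1 + s ^ 2) l Filter.atTop →
      Filter.Tendsto (cauchyK α p (q - 1)) l (nhds 0) := by
    intro l hl
    rw [tendsto_zero_iff_norm_tendsto_zero]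
    simp_rw [norm_cauchyK]
    refine one_add_sq_tendsto ?_ l hl
    push_cast
    linarith
  have h0 := integral_of_hasDerivAt_of_tendsto (cauchyK_hasDerivAt α p q)
    (((hi1.const_mul _).sub (hi2.const_mul _)).const_mul _)
    (hlim _ (Filter.tendsto_atTop_add_const_left _ _ (by
      simpa only [sq, id] using
        (Filter.tendsto_id (α := ℝ) (x := Filter.atBot)).atBot_mul_atBot₀ Filter.tendsto_id)))
    (hlim _ (Filter.tendsto_atTop_add_const_left _ _ (Filter.tendsto_pow_atTop two_ne_zero)))
  rw [integral_const_mul, integral_sub (hi1.const_mul _) (hi2.const_mul _), integral_const_mul,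
    integral_const_mul, sub_zero, mul_eq_zero, or_iff_right Complex.I_ne_zero, sub_eq_zero] at h0
  exact h0

/-! ### Cauchy's beta integral: closed form -/

theorem cauchyB_symm (α : ℝ) (p q : ℤ) : cauchyB α p q = cauchyB α q p := by
  rw [cauchyB, cauchyB, ← integral_neg_eq_self]
  refine integral_congr_ae (ae_of_all _ fun s => ?_)
  simp only [cauchyK, Complex.ofReal_neg, mul_neg, sub_neg_eq_add, neg_sq, ← sub_eq_add_neg]
  ring

/-- Cauchy's beta integral for shape parameters `α + j + 1` and `α + k + 1`. -/
theorem cauchyB_closed {α : ℝ} (hα : 0 < α) (j k : ℕ) :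
    cauchyB α (j + 1) (k + 1) = ((Real.pi * (2 : ℝ) ^ (-(2 * α)) * ((2 : ℝ) ^ (j + k))⁻¹ *
      (Real.Gamma (2 * α + j + k + 1) /
        (Real.Gamma (α + j + 1) * Real.Gamma (α + k + 1))) : ℝ) : ℂ) := by
  have step : ∀ j k : ℕ, cauchyB α (j + 1) (k + 1) = ((Real.pi * (2 : ℝ) ^ (-(2 * α)) *
        ((2 : ℝ) ^ (j + k))⁻¹ * (Real.Gamma (2 * α + j + k + 1) /
        (Real.Gamma (α + j + 1) * Real.Gamma (α + k + 1))) : ℝ) : ℂ) →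
      cauchyB α ((j + 1 : ℕ) + 1) (k + 1) = ((Real.pi * (2 : ℝ) ^ (-(2 * α)) *
        ((2 : ℝ) ^ (j + 1 + k))⁻¹ * (Real.Gamma (2 * α + (j + 1 : ℕ) + k + 1) /
        (Real.Gamma (α + (j + 1 : ℕ) + 1) * Real.Gamma (α + k + 1))) : ℝ) : ℂ) := by
    intro j k ih
    have hrec := cauchyB_rec (α := α) (p := (j : ℤ) + 1) (q := (k : ℤ) + 1)
      (by push_cast; have : (0 : ℝ) ≤ j := by positivity
          have : (0 : ℝ) ≤ k := by positivity
          linarith)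
    have h1 : Real.Gamma (2 * α + (j + 1 : ℕ) + k + 1) =
        (2 * α + j + k + 1) * Real.Gamma (2 * α + j + k + 1) := by
      rw [← Real.Gamma_add_one (by positivity)]
      congr 1
      push_cast
      ring
    have h2 : Real.Gamma (α + (j + 1 : ℕ) + 1) = (α + j + 1) * Real.Gamma (α + j + 1) := by
      rw [← Real.Gamma_add_one (by positivity)]
      congr 1
      push_cast
      ring
    have h3 : (2 * (α + j + 1) : ℂ) ≠ 0 := by
      have : (2 * (α + j + 1) : ℝ) ≠ 0 := by positivity
      exact_mod_cast this
    have h4 : (α + j + 1 : ℝ) ≠ 0 := by positivity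
    have h5 : (Real.Gamma (α + j + 1)) ≠ 0 := (Real.Gamma_pos_of_pos (by positivity)).ne'
    have h6 : (Real.Gamma (α + k + 1)) ≠ 0 := (Real.Gamma_pos_of_pos (by positivity)).ne'
    refine mul_left_cancel₀ h3 ?_
    rw [h1, h2]
    have h7 : (2 * (α + j + 1) : ℂ) * cauchyB α ((j + 1 : ℕ) + 1) (k + 1) =
        (2 * α + j + k + 1) * cauchyB α (j + 1) (k + 1) := by
      have e : (((j + 1 : ℕ) : ℤ) + 1) = (j : ℤ) + 1 + 1 := by push_cast; ring
      rw [e]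
      convert hrec using 1
      · push_cast; ring
      · push_cast; ring
    rw [h7, ih]
    norm_cast
    push_cast
    rw [show j + 1 + k = j + k + 1 by ring, pow_succ]
    field_simp
  have base : cauchyB α ((0 : ℕ) + 1) ((0 : ℕ) + 1) = ((Real.pi * (2 : ℝ) ^ (-(2 * α)) *
        ((2 : ℝ) ^ (0 + 0))⁻¹ * (Real.Gamma (2 * α + (0 : ℕ) + (0 : ℕ) + 1) /
        (Real.Gamma (α + (0 : ℕ) + 1) * Real.Gamma (α + (0 : ℕ) + 1))) : ℝ) : ℂ) := by
    have h1 : ∀ s : ℝ, cauchyK α 1 1 s = (((1 + s ^ 2) ^ (-(α + 1)) : ℝ) : ℂ) := by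
      intro s
      have hs : 0 < 1 + s ^ 2 := by positivity
      have h7 : (1 + (s : ℂ) ^ 2) = (1 - Complex.I * s) * (1 + Complex.I * s) := by
        linear_combination (s : ℂ) ^ 2 * Complex.I_sq
      rw [cauchyK, neg_add, ← sub_eq_add_neg, Real.rpow_sub_one hs.ne', zpow_neg_one, zpow_neg_one]
      push_cast
      rw [h7]
      have hm := one_sub_I_ne s
      have hp := one_add_I_ne s
      field_simp
    simp only [Nat.cast_zero, zero_add, add_zero, pow_zero, inv_one, mul_one]
    rw [cauchyB]
    simp_rw [h1]
    rw [integral_complex_ofReal, integral_one_add_sq_rpow (by linarith)]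
    congr 1
    have hd := Real.Gamma_mul_Gamma_add_half (α + 1 / 2)
    rw [show α + 1 / 2 + 1 / 2 = α + 1 by ring, show 2 * (α + 1 / 2) = 2 * α + 1 by ring,
      show 1 - (2 * α + 1) = -(2 * α) by ring] at hd
    have hG : Real.Gamma (α + 1) ≠ 0 := (Real.Gamma_pos_of_pos (by positivity)).ne'
    have hpi := Real.sq_sqrt Real.pi_pos.le
    rw [show α + 1 - 1 / 2 = α + 1 / 2 by ring]
    generalize Real.Gamma (α + 1 / 2) = X at hd ⊢
    generalize Real.Gamma (2 * α + 1) = Y at hd ⊢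
    generalize (2 : ℝ) ^ (-(2 * α)) = Z at hd ⊢
    field_simp
    linear_combination √Real.pi * hd + Y * Z * hpi
  have hk : ∀ k : ℕ, cauchyB α ((0 : ℕ) + 1) (k + 1) = ((Real.pi * (2 : ℝ) ^ (-(2 * α)) *
        ((2 : ℝ) ^ (0 + k))⁻¹ * (Real.Gamma (2 * α + (0 : ℕ) + k + 1) /
        (Real.Gamma (α + (0 : ℕ) + 1) * Real.Gamma (α + k + 1))) : ℝ) : ℂ) := by
    have hk' : ∀ k : ℕ, cauchyB α (k + 1) ((0 : ℕ) + 1) = ((Real.pi * (2 : ℝ) ^ (-(2 * α)) *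
        ((2 : ℝ) ^ (k + 0))⁻¹ * (Real.Gamma (2 * α + k + (0 : ℕ) + 1) /
        (Real.Gamma (α + k + 1) * Real.Gamma (α + (0 : ℕ) + 1))) : ℝ) : ℂ) := by
      intro k
      induction k with
      | zero => exact base
      | succ k ih => exact step k 0 ih
    intro k
    rw [cauchyB_symm, hk' k]
    congr 1
    rw [add_comm k 0, mul_comm (Real.Gamma (α + k + 1)), add_right_comm (2 * α) (k : ℝ)]
  induction j with
  | zero => exact hk k
  | succ j ih => exact step j k ih

theorem poch_ne_zero_of_neg {c : ℝ} {m : ℕ} (hc : c + m < 0) {l : ℕ} (hl : l ≤ m) :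
    poch c l ≠ 0 := by
  induction l with
  | zero => simp [poch_zero]
  | succ l ih =>
    rw [poch_succ]
    refine mul_ne_zero (ih (by omega)) (ne_of_lt ?_)
    have : (l : ℝ) ≤ m := by exact_mod_cast (by omega : l ≤ m)
    linarith

/-- Lowering the first index of the Cauchy beta integral produces the terms of the
hypergeometric sum. The denominators `(-2α-j-k)_l` do not vanish for `l ≤ j + k`. -/
theorem cauchyB_lower {α : ℝ} (hα : 0 < α) (j k l : ℕ) (hl : l ≤ j + k) :
    cauchyB α (j + 1 - l) (k + 1) =
      ((2 ^ l * poch (-α - j) l / poch (-(2 * α) - j - k) l : ℝ) : ℂ) *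
        cauchyB α (j + 1) (k + 1) := by
  induction l with
  | zero => simp [poch_zero]
  | succ l ih =>
    have hlr : (l : ℝ) + 1 ≤ j + k := by exact_mod_cast hl
    have hrec := cauchyB_rec (α := α) (p := (j : ℤ) - l) (q := (k : ℤ) + 1)
      (by push_cast; linarith)
    have e1 : (j : ℤ) - l + 1 = j + 1 - l := by ring
    have e2 : (j : ℤ) + 1 - (l + 1 : ℕ) = j - l := by push_cast; ring
    rw [e1, ih (by omega)] at hrec
    rw [e2]
    have hd : (-(2 * α) - j - k + l : ℝ) ≠ 0 := by linarith
    have hd' : (2 * α + (j - l : ℤ) + (k + 1 : ℤ) - 1 : ℂ) ≠ 0 := by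
      have : ((2 * α + (j - l : ℤ) + (k + 1 : ℤ) - 1 : ℝ) : ℂ) ≠ 0 := by
        rw [Complex.ofReal_ne_zero]
        push_cast
        linarith
      simpa using this
    refine mul_left_cancel₀ hd' ?_
    rw [← hrec]
    rw [poch_succ, poch_succ]
    have hp : poch (-(2 * α) - j - k) l ≠ 0 :=
      poch_ne_zero_of_neg (m := l) (by linarith) le_rfl
    have hpC : (poch (-(2 * α) - j - k) l : ℂ) ≠ 0 := by exact_mod_cast hp
    have hdC : (-(2 * α) - j - k + l : ℂ) ≠ 0 := by exact_mod_cast hd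
    push_cast
    field_simp
    ring

/-! ### The one-variable integrals -/

/-- Expanding `(is)^{j+k} = (1 - (1 - is))^{j+k}` lowers the first index of the Cauchy beta
integral, so the integral is a terminating `₂F₁` at `2`. -/
theorem integral_pow_cauchyK {α : ℝ} (hα : 0 < α) (j k : ℕ) :
    ∫ s : ℝ, (Complex.I * s) ^ (j + k) * cauchyK α (j + 1) (k + 1) s =
      ((hyp2F1Term (j + k) (-α - j) (-(2 * α) - j - k) 2 : ℝ) : ℂ) *
        cauchyB α (j + 1) (k + 1) := by
  have hint : ∀ l ∈ Finset.range (j + k + 1), Integrable fun s : ℝ =>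
      ((j + k).choose l : ℂ) * (-1) ^ l * cauchyK α (j + 1 - l) (k + 1) s := by
    intro l hl
    have hlr : (l : ℝ) ≤ j + k := by exact_mod_cast Nat.lt_succ_iff.mp (Finset.mem_range.mp hl)
    refine (cauchyK_integrable ?_).const_mul _
    push_cast
    linarith
  have hpt : ∀ s : ℝ, (Complex.I * s) ^ (j + k) * cauchyK α (j + 1) (k + 1) s =
      ∑ l ∈ Finset.range (j + k + 1),
        ((j + k).choose l : ℂ) * (-1) ^ l * cauchyK α (j + 1 - l) (k + 1) s := by
    intro s
    have hm := one_sub_I_ne s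
    have e : (Complex.I * s : ℂ) = -(1 - Complex.I * s) + 1 := by ring
    have e2 : (Complex.I * s : ℂ) ^ (j + k) = (-(1 - Complex.I * s) + 1) ^ (j + k) := by
      rw [← e]
    rw [e2, add_pow, Finset.sum_mul]
    refine Finset.sum_congr rfl fun l _ => ?_
    rw [neg_pow (1 - Complex.I * s : ℂ) l, cauchyK, cauchyK,
      show (-((j : ℤ) + 1 - l)) = -((j : ℤ) + 1) + (l : ℤ) by ring, zpow_add₀ hm, zpow_natCast]
    ring
  simp_rw [hpt]
  rw [integral_finsetSum _ hint]
  simp_rw [integral_const_mul]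
  rw [hyp2F1Term, Complex.ofReal_sum, Finset.sum_mul]
  refine Finset.sum_congr rfl fun l hl => ?_
  have hl' := Nat.lt_succ_iff.mp (Finset.mem_range.mp hl)
  have h := cauchyB_lower hα j k l hl'
  rw [cauchyB] at h
  rw [h, poch_neg_nat, ← mul_assoc]
  congr 1
  have hf : (l.factorial : ℝ) ≠ 0 := by positivity
  norm_cast
  push_cast
  field_simp

/-- Since `1 - (1 - is)⁻¹ = -is / (1 - is)`, the two factors `s` coming from the indices `j + 1`
and `k + 1` cancel `s²`, leaving a polynomial times a Cauchy beta integrand. -/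
theorem lagCF_mul_conj {α : ℝ} (hα : 0 < α) (j k : ℕ) {s : ℝ} (hs : s ≠ 0) :
    lagCF α (j + 1) s * starRingEnd ℂ (lagCF α (k + 1) s) / (s : ℂ) ^ 2 =
      ((lagNorm α (j + 1) * lagNorm α (k + 1) * (-1) ^ j : ℝ) : ℂ) *
        ((Complex.I * s) ^ (j + k) * cauchyK α (j + 1) (k + 1) s) := by
  have hm := one_sub_I_ne s
  have hp := one_add_I_ne s
  have hsC : (s : ℂ) ≠ 0 := by exact_mod_cast hs
  have e1 : (1 - (1 - Complex.I * s)⁻¹ : ℂ) = -(Complex.I * s) * (1 - Complex.I * s)⁻¹ := by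
    field_simp
    ring
  have e2 : starRingEnd ℂ (1 - (1 - Complex.I * s)⁻¹ : ℂ) =
      (Complex.I * s) * (1 + Complex.I * s)⁻¹ := by
    simp only [map_sub, map_one, map_inv₀, map_mul, Complex.conj_I, Complex.conj_ofReal]
    rw [show (1 - -Complex.I * s : ℂ) = 1 + Complex.I * s by ring]
    field_simp
    ring
  have e3 := gCF_normSq hα s
  simp only [lagCF, map_mul, map_pow, Complex.conj_ofReal]
  rw [e2, e1, cauchyK, ← e3, zpow_neg, zpow_neg]
  rw [show ((j : ℤ) + 1) = ((j + 1 : ℕ) : ℤ) by push_cast; ring,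
    show ((k : ℤ) + 1) = ((k + 1 : ℕ) : ℤ) by push_cast; ring, zpow_natCast, zpow_natCast,
    mul_pow, mul_pow, inv_pow, inv_pow, neg_pow (Complex.I * s : ℂ)]
  push_cast
  have hI : (Complex.I * s : ℂ) ^ (j + 1) * (Complex.I * s) ^ (k + 1) =
      -(s : ℂ) ^ 2 * (Complex.I * s) ^ (j + k) := by
    linear_combination (s : ℂ) ^ 2 * (Complex.I * s) ^ (j + k) * Complex.I_sq
  field_simp
  linear_combination ((-1) ^ (j + 1) * lagNorm α (j + 1) * lagNorm α (k + 1) * gCF α s *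
    starRingEnd ℂ (gCF α s)) * hI

/-- The one-variable integral is `A_{j+1,k+1}(α)` up to a constant and the sign `(-1)^j`, which
cancels between the two variables. -/
theorem integral_lagCF_mul_conj {α : ℝ} (hα : 0 < α) (j k : ℕ) :
    ∫ s : ℝ, lagCF α (j + 1) s * starRingEnd ℂ (lagCF α (k + 1) s) / (s : ℂ) ^ 2 =
      (((-1) ^ j * (Real.pi * (2 : ℝ) ^ (2 - 2 * α)) * sarA α (j + 1) (k + 1) : ℝ) : ℂ) := by
  have hae : (fun s : ℝ => lagCF α (j + 1) s * starRingEnd ℂ (lagCF α (k + 1) s) / (s : ℂ) ^ 2)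
      =ᵐ[volume] fun s : ℝ => ((lagNorm α (j + 1) * lagNorm α (k + 1) * (-1) ^ j : ℝ) : ℂ) *
        ((Complex.I * s) ^ (j + k) * cauchyK α (j + 1) (k + 1) s) := by
    have h0 : ∀ᵐ s : ℝ, s ≠ 0 := by simp [ae_iff]
    filter_upwards [h0] with s hs using lagCF_mul_conj hα j k hs
  rw [integral_congr_ae hae, integral_const_mul, integral_pow_cauchyK hα, cauchyB_closed hα,
    ← Complex.ofReal_mul, ← Complex.ofReal_mul]
  congr 1
  rw [sarA, show j + 1 + (k + 1) - 2 = j + k by omega]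
  have hsq : √(poch α (j + 1) * poch α (k + 1) /
      (((j + 1).factorial : ℝ) * (k + 1).factorial)) = lagNorm α (j + 1) * lagNorm α (k + 1) := by
    rw [lagNorm, lagNorm, ← Real.sqrt_mul (by have := poch_pos hα (j + 1); positivity)]
    congr 1
    field_simp
  rw [hsq]
  push_cast
  rw [show 2 * α + ((j : ℝ) + 1) + (k + 1) - 1 = 2 * α + j + k + 1 by ring,
    show 1 - α - ((j : ℝ) + 1) = -α - j by ring,
    show 2 - 2 * α - ((j : ℝ) + 1) - (k + 1) = -(2 * α) - j - k by ring,
    show α + ((j : ℝ) + 1) = α + j + 1 by ring, show α + ((k : ℝ) + 1) = α + k + 1 by ring,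
    show j + 1 + (k + 1) = j + k + 2 by ring, pow_add (2 : ℝ) (j + k) 2,
    show (2 : ℝ) - 2 * α = -(2 * α) + 2 by ring, Real.rpow_add two_pos]
  norm_num
  ring

/-! ### Bounds and summability -/

theorem lagNorm_zero (α : ℝ) : lagNorm α 0 = 1 := by simp [lagNorm, poch_zero]

theorem norm_gCF_le {α : ℝ} (hα : 0 < α) (s : ℝ) : ‖gCF α s‖ ≤ 1 := by
  have h := gCF_normSq hα s
  rw [Complex.mul_conj, Complex.ofReal_inj, Complex.normSq_eq_norm_sq] at h
  have h1 : (1 + s ^ 2) ^ (-α) ≤ 1 :=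
    Real.rpow_le_one_of_one_le_of_nonpos (by nlinarith [sq_nonneg s]) (by linarith)
  have h0 := norm_nonneg (gCF α s)
  nlinarith

theorem norm_one_sub_inv (s : ℝ) :
    ‖(1 - (1 - Complex.I * s)⁻¹ : ℂ)‖ = |s| / √(1 + s ^ 2) := by
  have hm := one_sub_I_ne s
  have e1 : (1 - (1 - Complex.I * s)⁻¹ : ℂ) = -(Complex.I * s) / (1 - Complex.I * s) := by
    field_simp
    ring
  rw [e1, norm_div, norm_one_sub_I]
  simp

theorem abs_div_sqrt_le (s : ℝ) : |s| / √(1 + s ^ 2) ≤ 1 := by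
  rw [div_le_one (by positivity)]
  exact Real.abs_le_sqrt (by linarith)

theorem norm_lagCF_le {α : ℝ} (hα : 0 < α) (n : ℕ) (s : ℝ) :
    ‖lagCF α n s‖ ≤ lagNorm α n := by
  rw [lagCF, norm_mul, norm_mul, norm_pow, norm_one_sub_inv, Complex.norm_real,
    Real.norm_of_nonneg (lagNorm_nonneg α n)]
  have h1 := pow_le_one₀ (n := n) (by positivity) (abs_div_sqrt_le s)
  have h2 := norm_gCF_le hα s
  calc lagNorm α n * ‖gCF α s‖ * (|s| / √(1 + s ^ 2)) ^ n ≤ lagNorm α n * 1 * 1 := by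
        gcongr
        exact mul_nonneg (lagNorm_nonneg α n) zero_le_one
        exact lagNorm_nonneg α n
    _ = lagNorm α n := by ring

/-- The factor `|s|` makes the transforms of positive index vanish at `0`, which compensates the
singular weight `s⁻²` of the distance covariance. -/
theorem norm_lagCF_succ_le {α : ℝ} (hα : 0 < α) (n : ℕ) (s : ℝ) :
    ‖lagCF α (n + 1) s‖ ≤ lagNorm α (n + 1) * (|s| / √(1 + s ^ 2)) := by
  rw [lagCF, norm_mul, norm_mul, norm_pow, norm_one_sub_inv, Complex.norm_real,
    Real.norm_of_nonneg (lagNorm_nonneg α _)]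
  have h1 := pow_le_of_le_one (n := n + 1) (by positivity) (abs_div_sqrt_le s) (by omega)
  have h2 := norm_gCF_le hα s
  calc lagNorm α (n + 1) * ‖gCF α s‖ * (|s| / √(1 + s ^ 2)) ^ (n + 1)
      ≤ lagNorm α (n + 1) * 1 * (|s| / √(1 + s ^ 2)) := by
        gcongr
        exact mul_nonneg (lagNorm_nonneg α _) zero_le_one
        exact lagNorm_nonneg α _
    _ = lagNorm α (n + 1) * (|s| / √(1 + s ^ 2)) := by ring

theorem gCF_continuous {α : ℝ} (hα : 0 < α) : Continuous (gCF α) := by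
  unfold gCF
  have h : Continuous (gInt α) :=
    continuous_iff_continuousAt.2 fun s => (gInt_hasDerivAt hα s).continuousAt
  fun_prop

theorem lagCF_continuous {α : ℝ} (hα : 0 < α) (n : ℕ) : Continuous (lagCF α n) := by
  unfold lagCF
  have := gCF_continuous hα
  have h2 : Continuous fun s : ℝ => (1 - Complex.I * s : ℂ)⁻¹ :=
    Continuous.inv₀ (by fun_prop) one_sub_I_ne
  fun_prop

theorem lagCF_zero_right {α : ℝ} (n : ℕ) : lagCF α (n + 1) 0 = 0 := by
  simp [lagCF]

theorem lagCF_zero_zero {α : ℝ} (hα : 0 < α) : lagCF α 0 0 = 1 := by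
  simp [lagCF, lagNorm_zero, gCF_zero hα]

/-- The integrand `lagCF α (j+1) s * conj (lagCF α (k+1) s) / s²`, whose integral is a multiple of
`A_{j+1,k+1}(α)`. At `s = 0` it takes the value `0` because of the division by zero. -/
noncomputable def kerProd (α : ℝ) (jk : ℕ × ℕ) (s : ℝ) : ℂ :=
  lagCF α (jk.1 + 1) s * starRingEnd ℂ (lagCF α (jk.2 + 1) s) / (s : ℂ) ^ 2

theorem norm_kerProd_le {α : ℝ} (hα : 0 < α) (jk : ℕ × ℕ) (s : ℝ) :
    ‖kerProd α jk s‖ ≤ lagNorm α (jk.1 + 1) * lagNorm α (jk.2 + 1) * (1 + s ^ 2)⁻¹ := by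
  have h0 := lagNorm_nonneg α (jk.1 + 1)
  have h0' := lagNorm_nonneg α (jk.2 + 1)
  rw [kerProd, norm_div, norm_mul, RCLike.norm_conj, norm_pow, Complex.norm_real,
    Real.norm_eq_abs, sq_abs]
  rcases eq_or_ne s 0 with rfl | hs
  · simp
    positivity
  have h1 := norm_lagCF_succ_le hα jk.1 s
  have h2 := norm_lagCF_succ_le hα jk.2 s
  have hs2 : 0 < s ^ 2 := by positivity
  rw [div_le_iff₀ hs2]
  have e : lagNorm α (jk.1 + 1) * lagNorm α (jk.2 + 1) * (1 + s ^ 2)⁻¹ * s ^ 2 =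
      (lagNorm α (jk.1 + 1) * (|s| / √(1 + s ^ 2))) *
        (lagNorm α (jk.2 + 1) * (|s| / √(1 + s ^ 2))) := by
    have h3 : √(1 + s ^ 2) ^ 2 = 1 + s ^ 2 := Real.sq_sqrt (by positivity)
    rw [show (lagNorm α (jk.1 + 1) * (|s| / √(1 + s ^ 2))) *
        (lagNorm α (jk.2 + 1) * (|s| / √(1 + s ^ 2))) =
        lagNorm α (jk.1 + 1) * lagNorm α (jk.2 + 1) * (|s| ^ 2 / √(1 + s ^ 2) ^ 2) by ring,
      h3, sq_abs]
    ring
  rw [e]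
  exact mul_le_mul h1 h2 (norm_nonneg _) (by positivity)

theorem kerProd_integrable {α : ℝ} (hα : 0 < α) (jk : ℕ × ℕ) : Integrable (kerProd α jk) := by
  refine Integrable.mono' (integrable_inv_one_add_sq.const_mul
    (lagNorm α (jk.1 + 1) * lagNorm α (jk.2 + 1))) ?_
    (ae_of_all _ (norm_kerProd_le hα jk))
  refine Measurable.aestronglyMeasurable ?_
  have h1 := (lagCF_continuous hα (jk.1 + 1)).measurable
  have h2 := (Complex.continuous_conj.comp (lagCF_continuous hα (jk.2 + 1))).measurable
  exact (h1.mul h2).div (by fun_prop)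

theorem integral_norm_kerProd_le {α : ℝ} (hα : 0 < α) (jk : ℕ × ℕ) :
    ∫ s, ‖kerProd α jk s‖ ≤ Real.pi * (lagNorm α (jk.1 + 1) * lagNorm α (jk.2 + 1)) := by
  calc ∫ s, ‖kerProd α jk s‖
      ≤ ∫ s : ℝ, lagNorm α (jk.1 + 1) * lagNorm α (jk.2 + 1) * (1 + s ^ 2)⁻¹ :=
        integral_mono (kerProd_integrable hα jk).norm
          (integrable_inv_one_add_sq.const_mul _) (norm_kerProd_le hα jk)
    _ = _ := by
        rw [integral_const_mul, integral_univ_inv_one_add_sq]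
        ring

theorem integral_kerProd {α : ℝ} (hα : 0 < α) (jk : ℕ × ℕ) :
    ∫ s, kerProd α jk s = (((-1) ^ jk.1 * (Real.pi * (2 : ℝ) ^ (2 - 2 * α)) *
      sarA α (jk.1 + 1) (jk.2 + 1) : ℝ) : ℂ) :=
  integral_lagCF_mul_conj hα jk.1 jk.2

theorem sarCoeff_nonneg {α β lam : ℝ} (hlam : 0 ≤ lam) (n : ℕ) : 0 ≤ sarCoeff α β lam n := by
  rw [sarCoeff]
  positivity

theorem sarCoeff_zero (α β lam : ℝ) : sarCoeff α β lam 0 = 1 := by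
  simp [sarCoeff, poch_zero]

theorem sarCoeff_le {α β lam : ℝ} (hαβ : β ≤ α) (hβ : 0 < β) (hlam : 0 ≤ lam) (n : ℕ) :
    sarCoeff α β lam n ≤ lam ^ n := by
  rw [sarCoeff]
  refine mul_le_of_le_one_left (by positivity) ?_
  refine Real.sqrt_le_one.2 ?_
  rw [div_le_one (poch_pos (hβ.trans_le hαβ) n)]
  exact poch_mono hβ hαβ n

/-- The product `a_n L_n(0) L_n(0)` of a coefficient with both normalising constants. -/
theorem sarCoeff_mul_lagNorm {α β lam : ℝ} (hα : 0 < α) (hβ : 0 < β) (n : ℕ) :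
    sarCoeff α β lam n * (lagNorm α n * lagNorm β n) =
      poch β n / n.factorial * lam ^ n := by
  have h1 := poch_pos hα n
  have h2 := poch_pos hβ n
  have h3 : √(poch β n / poch α n) * (lagNorm α n * lagNorm β n) =
      poch β n / n.factorial := by
    rw [lagNorm, lagNorm, ← Real.sqrt_mul (by positivity), ← Real.sqrt_mul (by positivity)]
    rw [show poch β n / poch α n * (poch α n / n.factorial * (poch β n / n.factorial)) =
      (poch β n / n.factorial) ^ 2 by field_simp]
    exact Real.sqrt_sq (by positivity)
  rw [sarCoeff, ← h3]
  ring

/-- Ratio test: the terms are `(β)_n λ^n / n!`. -/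
theorem sarCoeff_lagNorm_summable {α β lam : ℝ} (hα : 0 < α) (hβ : 0 < β) (h0 : 0 < lam)
    (h1 : lam < 1) : Summable fun n => sarCoeff α β lam n * (lagNorm α n * lagNorm β n) := by
  simp_rw [sarCoeff_mul_lagNorm hα hβ]
  have hne : ∀ n : ℕ, poch β n / n.factorial * lam ^ n ≠ 0 := fun n => by
    have := poch_pos hβ n
    positivity
  refine summable_of_ratio_test_tendsto_lt_one h1 (Filter.Eventually.of_forall hne) ?_
  have hr : ∀ n : ℕ, ‖poch β (n + 1) / (n + 1).factorial * lam ^ (n + 1)‖ /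
      ‖poch β n / n.factorial * lam ^ n‖ = (1 + (β - 1) * (1 / ((n : ℝ) + 1))) * lam := by
    intro n
    have hp := poch_pos hβ n
    have hp' := poch_pos hβ (n + 1)
    rw [Real.norm_of_nonneg (by positivity), Real.norm_of_nonneg (by positivity), poch_succ,
      Nat.factorial_succ, pow_succ]
    push_cast
    field_simp
    ring
  simp_rw [hr]
  have := ((tendsto_one_div_add_atTop_nhds_zero_nat (𝕜 := ℝ)).const_mul (β - 1)).const_add 1
  simpa using this.mul_const lam

/-! ### The double series -/

/-- The joint characteristic function has the bilinear expansion of the density, with each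
`lagDens` replaced by its Fourier transform. -/
theorem hasSum_jointCF {α β lam : ℝ} (hαβ : β ≤ α) (hβ : 0 < β) (h0 : 0 < lam) (h1 : lam < 1)
    {φ : ℝ → ℝ → ℝ}
    (hφ : ∀ x y, φ x y = ∑' n, sarCoeff α β lam n * (lagDens α n x * lagDens β n y)) (s t : ℝ) :
    HasSum (fun n => (sarCoeff α β lam n : ℂ) * (lagCF α n s * lagCF β n t))
      (jointCF₁ φ s t) := by
  have hα := hβ.trans_le hαβ
  set F : ℕ → ℝ × ℝ → ℂ := fun n z => (sarCoeff α β lam n : ℂ) *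
    ((Complex.exp (Complex.I * (s * z.1)) * (lagDens α n z.1 : ℂ)) *
      (Complex.exp (Complex.I * (t * z.2)) * (lagDens β n z.2 : ℂ))) with hF
  have hFint : ∀ n, Integrable (F n) := fun n =>
    ((lagDens_fourier_integrable hα n s).mul_prod (lagDens_fourier_integrable hβ n t)).const_mul _
  have hexpn : ∀ a b : ℝ, ‖Complex.exp (Complex.I * (a * b))‖ = 1 := fun a b => by
    rw [← Complex.ofReal_mul, mul_comm, Complex.norm_exp_ofReal_mul_I]
  have hFn : ∀ n, ∫ z, ‖F n z‖ ≤ lam ^ n := by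
    intro n
    have e : ∀ z : ℝ × ℝ, ‖F n z‖ =
        sarCoeff α β lam n * (‖lagDens α n z.1‖ * ‖lagDens β n z.2‖) := by
      intro z
      simp only [hF, norm_mul, hexpn, one_mul, Complex.norm_real]
      rw [Real.norm_of_nonneg (sarCoeff_nonneg h0.le n)]
    simp_rw [e]
    rw [integral_const_mul, Measure.volume_eq_prod, integral_prod_mul
      (fun x => ‖lagDens α n x‖) (fun y => ‖lagDens β n y‖)]
    have i1 := lagDens_L1 hα n
    have i2 := lagDens_L1 hβ n
    have j1 : 0 ≤ ∫ x, ‖lagDens α n x‖ := integral_nonneg fun _ => norm_nonneg _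
    have j2 : 0 ≤ ∫ x, ‖lagDens β n x‖ := integral_nonneg fun _ => norm_nonneg _
    have c0 := sarCoeff_nonneg (α := α) (β := β) h0.le n
    have c1 := sarCoeff_le hαβ hβ h0.le n
    calc _ ≤ sarCoeff α β lam n * 1 :=
          mul_le_mul_of_nonneg_left (mul_le_one₀ i1 j2 i2) c0
      _ ≤ lam ^ n := by linarith
  have hsum : Summable fun n => ∫ z, ‖F n z‖ :=
    Summable.of_nonneg_of_le (fun n => integral_nonneg fun _ => norm_nonneg _) hFn
      (summable_geometric_of_lt_one h0.le h1)
  have key := hasSum_integral_of_summable_integral_norm hFint hsum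
  have e1 : ∀ n, ∫ z, F n z = (sarCoeff α β lam n : ℂ) * (lagCF α n s * lagCF β n t) := by
    intro n
    rw [← lagDens_fourier hα n s, ← lagDens_fourier hβ n t]
    simp only [hF]
    rw [integral_const_mul, Measure.volume_eq_prod, integral_prod_mul
      (fun x : ℝ => Complex.exp (Complex.I * (s * x)) * (lagDens α n x : ℂ))
      (fun y : ℝ => Complex.exp (Complex.I * (t * y)) * (lagDens β n y : ℂ))]
  have e2 : ∫ z, ∑' n, F n z = jointCF₁ φ s t := by
    rw [jointCF₁]
    refine integral_congr_ae (ae_of_all _ fun z => ?_)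
    simp only [hF]
    rw [hφ, Complex.ofReal_tsum, ← tsum_mul_left, mul_add, Complex.exp_add]
    refine tsum_congr fun n => ?_
    push_cast
    ring
  simp_rw [e1] at key
  rwa [e2] at key

/-- Subtracting the product of the marginal characteristic functions removes exactly the term
`n = 0`, because `lagCF α n 0 = 0` for `n ≥ 1`. -/
theorem jointCF_sub {α β lam : ℝ} (hαβ : β ≤ α) (hβ : 0 < β) (h0 : 0 < lam) (h1 : lam < 1)
    {φ : ℝ → ℝ → ℝ}
    (hφ : ∀ x y, φ x y = ∑' n, sarCoeff α β lam n * (lagDens α n x * lagDens β n y)) (s t : ℝ) :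
    jointCF₁ φ s t - jointCF₁ φ s 0 * jointCF₁ φ 0 t =
      ∑' n, (sarCoeff α β lam (n + 1) : ℂ) * (lagCF α (n + 1) s * lagCF β (n + 1) t) := by
  have hα := hβ.trans_le hαβ
  have key := hasSum_jointCF hαβ hβ h0 h1 hφ
  have hs : jointCF₁ φ s 0 = lagCF α 0 s := by
    rw [← (key s 0).tsum_eq, tsum_eq_single 0]
    · simp [sarCoeff_zero, lagCF_zero_zero hβ]
    · intro n hn
      obtain ⟨m, rfl⟩ := Nat.exists_eq_succ_of_ne_zero hn
      simp [lagCF_zero_right]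
  have ht : jointCF₁ φ 0 t = lagCF β 0 t := by
    rw [← (key 0 t).tsum_eq, tsum_eq_single 0]
    · simp [sarCoeff_zero, lagCF_zero_zero hα]
    · intro n hn
      obtain ⟨m, rfl⟩ := Nat.exists_eq_succ_of_ne_zero hn
      simp [lagCF_zero_right]
  rw [hs, ht, ← (key s t).tsum_eq, (key s t).summable.tsum_eq_zero_add]
  simp [sarCoeff_zero]

/-- The summand of the double series obtained by squaring the difference of characteristic
functions and dividing by `s² t²`. -/
noncomputable def dcovTerm (α β lam : ℝ) (jk : ℕ × ℕ) (w : ℝ × ℝ) : ℂ :=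
  ((sarCoeff α β lam (jk.1 + 1) * sarCoeff α β lam (jk.2 + 1) : ℝ) : ℂ) *
    (kerProd α jk w.1 * kerProd β jk w.2)

/-- The integrand of the distance covariance as a double series. The identity also holds when
`w.1 = 0` or `w.2 = 0`: both sides are then `0` by the convention for division by zero. -/
theorem integrand_eq_tsum {α β lam : ℝ} (hαβ : β ≤ α) (hβ : 0 < β) (h0 : 0 < lam)
    (h1 : lam < 1) {φ : ℝ → ℝ → ℝ}
    (hφ : ∀ x y, φ x y = ∑' n, sarCoeff α β lam n * (lagDens α n x * lagDens β n y))
    (w : ℝ × ℝ) :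
    ((‖jointCF₁ φ w.1 w.2 - jointCF₁ φ w.1 0 * jointCF₁ φ 0 w.2‖ ^ 2 /
      (w.1 ^ 2 * w.2 ^ 2) : ℝ) : ℂ) = ∑' jk, dcovTerm α β lam jk w := by
  have hα := hβ.trans_le hαβ
  rw [jointCF_sub hαβ hβ h0 h1 hφ]
  set f : ℕ → ℂ := fun n =>
    (sarCoeff α β lam (n + 1) : ℂ) * (lagCF α (n + 1) w.1 * lagCF β (n + 1) w.2) with hf
  have hfs : Summable fun n => ‖f n‖ := by
    refine Summable.of_nonneg_of_le (fun _ => norm_nonneg _) (fun n => ?_)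
      ((summable_nat_add_iff 1).2 (sarCoeff_lagNorm_summable hα hβ h0 h1))
    simp only [hf, norm_mul, Complex.norm_real]
    rw [Real.norm_of_nonneg (sarCoeff_nonneg h0.le _)]
    refine mul_le_mul_of_nonneg_left ?_ (sarCoeff_nonneg h0.le _)
    exact mul_le_mul (norm_lagCF_le hα _ _) (norm_lagCF_le hβ _ _) (norm_nonneg _)
      (lagNorm_nonneg _ _)
  have hgs : Summable fun n => ‖starRingEnd ℂ (f n)‖ := by simpa using hfs
  have e : ((‖∑' n, f n‖ ^ 2 : ℝ) : ℂ) = (∑' n, f n) * ∑' n, starRingEnd ℂ (f n) := by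
    rw [← Complex.conj_tsum, Complex.mul_conj, Complex.normSq_eq_norm_sq]
  rw [Complex.ofReal_div, e, tsum_mul_tsum_of_summable_norm hfs hgs, ← tsum_div_const]
  refine tsum_congr fun jk => ?_
  simp only [hf, dcovTerm, kerProd, map_mul, Complex.conj_ofReal]
  push_cast
  rw [← div_mul_div_comm]
  ring

/-- The product series that dominates every interchange of sum and integral. -/
theorem dominating_summable {α β lam : ℝ} (hα : 0 < α) (hβ : 0 < β) (h0 : 0 < lam)
    (h1 : lam < 1) : Summable fun jk : ℕ × ℕ =>
      (sarCoeff α β lam (jk.1 + 1) * (lagNorm α (jk.1 + 1) * lagNorm β (jk.1 + 1))) *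
        (sarCoeff α β lam (jk.2 + 1) * (lagNorm α (jk.2 + 1) * lagNorm β (jk.2 + 1))) := by
  have h := (summable_nat_add_iff 1).2 (sarCoeff_lagNorm_summable hα hβ h0 h1)
  have hnn : ∀ n, 0 ≤ sarCoeff α β lam (n + 1) *
      (lagNorm α (n + 1) * lagNorm β (n + 1)) := fun n =>
    mul_nonneg (sarCoeff_nonneg h0.le _) (mul_nonneg (lagNorm_nonneg _ _) (lagNorm_nonneg _ _))
  exact h.mul_of_nonneg h hnn hnn

theorem dcovTerm_integrable {α β : ℝ} (lam : ℝ) (hα : 0 < α) (hβ : 0 < β) (jk : ℕ × ℕ) :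
    Integrable (dcovTerm α β lam jk) :=
  ((kerProd_integrable hα jk).mul_prod (kerProd_integrable hβ jk)).const_mul _

theorem summable_integral_norm_dcovTerm {α β lam : ℝ} (hα : 0 < α) (hβ : 0 < β) (h0 : 0 < lam)
    (h1 : lam < 1) : Summable fun jk => ∫ w, ‖dcovTerm α β lam jk w‖ := by
  refine Summable.of_nonneg_of_le (fun _ => integral_nonneg fun _ => norm_nonneg _)
    (fun jk => ?_) ((dominating_summable hα hβ h0 h1).mul_left (Real.pi * Real.pi))
  have c1 := sarCoeff_nonneg (α := α) (β := β) h0.le (jk.1 + 1)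
  have c2 := sarCoeff_nonneg (α := α) (β := β) h0.le (jk.2 + 1)
  have e : ∀ w : ℝ × ℝ, ‖dcovTerm α β lam jk w‖ =
      (sarCoeff α β lam (jk.1 + 1) * sarCoeff α β lam (jk.2 + 1)) *
        (‖kerProd α jk w.1‖ * ‖kerProd β jk w.2‖) := by
    intro w
    simp only [dcovTerm]
    rw [norm_mul, norm_mul, Complex.norm_real, Real.norm_of_nonneg (mul_nonneg c1 c2)]
  simp_rw [e]
  rw [integral_const_mul, Measure.volume_eq_prod, integral_prod_mul
      (fun x => ‖kerProd α jk x‖) (fun y => ‖kerProd β jk y‖)]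
  have i1 := integral_norm_kerProd_le hα jk
  have i2 := integral_norm_kerProd_le hβ jk
  have j1 : 0 ≤ ∫ x, ‖kerProd α jk x‖ := integral_nonneg fun _ => norm_nonneg _
  have j2 : 0 ≤ ∫ x, ‖kerProd β jk x‖ := integral_nonneg fun _ => norm_nonneg _
  calc _ ≤ (sarCoeff α β lam (jk.1 + 1) * sarCoeff α β lam (jk.2 + 1)) *
        ((Real.pi * (lagNorm α (jk.1 + 1) * lagNorm α (jk.2 + 1))) *
          (Real.pi * (lagNorm β (jk.1 + 1) * lagNorm β (jk.2 + 1)))) :=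
        mul_le_mul_of_nonneg_left (mul_le_mul i1 i2 j2 (j1.trans i1)) (mul_nonneg c1 c2)
    _ = _ := by ring

theorem integral_dcovTerm {α β : ℝ} (lam : ℝ) (hα : 0 < α) (hβ : 0 < β) (jk : ℕ × ℕ) :
    ∫ w, dcovTerm α β lam jk w =
      (((Real.pi * Real.pi * (2 : ℝ) ^ (2 * (2 - α - β))) *
        (sarCoeff α β lam (jk.1 + 1) * sarCoeff α β lam (jk.2 + 1) *
          sarA α (jk.1 + 1) (jk.2 + 1) * sarA β (jk.1 + 1) (jk.2 + 1)) : ℝ) : ℂ) := by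
  simp only [dcovTerm]
  rw [integral_const_mul, Measure.volume_eq_prod, integral_prod_mul (kerProd α jk) (kerProd β jk),
    integral_kerProd hα, integral_kerProd hβ, ← Complex.ofReal_mul, ← Complex.ofReal_mul]
  congr 1
  have hsgn : ((-1 : ℝ) ^ jk.1) ^ 2 = 1 := by
    rw [← pow_mul, mul_comm, pow_mul]
    simp
  rw [show 2 * (2 - α - β) = (2 - 2 * α) + (2 - 2 * β) by ring, Real.rpow_add two_pos]
  linear_combination (sarCoeff α β lam (jk.1 + 1) * sarCoeff α β lam (jk.2 + 1) *
    (Real.pi * 2 ^ (2 - 2 * α) * sarA α (jk.1 + 1) (jk.2 + 1)) *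
    (Real.pi * 2 ^ (2 - 2 * β) * sarA β (jk.1 + 1) (jk.2 + 1))) * hsgn

/-- **Distance covariance of the Sarmanov bivariate gamma distribution**: for `α ≥ β > 0`
and `λ ∈ (0,1)`, if `(X,Y)` has joint density
`φ_X(x)φ_Y(y) Σ_n a_n L_n^{(α−1)}(x) L_n^{(β−1)}(y)` with gamma marginals, then
`V²(X,Y) = 2^{2(2−α−β)} Σ_{j,k≥1} a_j a_k A_{j,k}(α) A_{j,k}(β)`, the double series
converging absolutely. -/
theorem dcov_sarmanov_gamma (α β lam : ℝ) (hαβ : β ≤ α) (hβ : 0 < β)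
    (hlam : lam ∈ Set.Ioo (0 : ℝ) 1) (φXY : ℝ → ℝ → ℝ)
    (hexp : ∀ x y : ℝ, 0 < x → 0 < y → φXY x y =
      gammaDensity α x * gammaDensity β y *
        ∑' n : ℕ, sarCoeff α β lam n * laguerreFn (α - 1) n x * laguerreFn (β - 1) n y)
    (hsupp : ∀ x y : ℝ, ¬(0 < x ∧ 0 < y) → φXY x y = 0) :
    dcov₁ φXY = (2 : ℝ) ^ (2 * (2 - α - β)) *
      ∑' jk : ℕ × ℕ,
        sarCoeff α β lam (jk.1 + 1) * sarCoeff α β lam (jk.2 + 1) *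
          sarA α (jk.1 + 1) (jk.2 + 1) * sarA β (jk.1 + 1) (jk.2 + 1) ∧
    Summable (fun jk : ℕ × ℕ =>
      |sarCoeff α β lam (jk.1 + 1) * sarCoeff α β lam (jk.2 + 1) *
        sarA α (jk.1 + 1) (jk.2 + 1) * sarA β (jk.1 + 1) (jk.2 + 1)|) := by

  have hα := hβ.trans_le hαβ
  obtain ⟨h0, h1⟩ := hlam
  have hφ : ∀ x y, φXY x y =
      ∑' n, sarCoeff α β lam n * (lagDens α n x * lagDens β n y) := by
    intro x y
    by_cases hxy : 0 < x ∧ 0 < y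
    · rw [hexp x y hxy.1 hxy.2, ← tsum_mul_left]
      refine tsum_congr fun n => ?_
      simp only [lagDens]
      ring
    · rw [hsupp x y hxy]
      -- Off the open quadrant one of the two densities vanishes.
      have hz : gammaDensity α x * gammaDensity β y = 0 := by
        rcases not_and_or.1 hxy with h | h <;> simp [gammaDensity, h]
      have hzn : ∀ n, sarCoeff α β lam n * (lagDens α n x * lagDens β n y) = 0 := by
        intro n
        simp only [lagDens]
        linear_combination
          sarCoeff α β lam n * laguerreFn (α - 1) n x * laguerreFn (β - 1) n y * hz
      simp [hzn]
  -- The double series for the integrand is integrated termwise.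
  have hS := summable_integral_norm_dcovTerm hα hβ h0 h1
  have key := hasSum_integral_of_summable_integral_norm (dcovTerm_integrable lam hα hβ) hS
  simp_rw [integral_dcovTerm lam hα hβ, ← integrand_eq_tsum hαβ hβ h0 h1 hφ] at key
  rw [integral_complex_ofReal, Complex.hasSum_ofReal] at key
  have hC : Real.pi * Real.pi * (2 : ℝ) ^ (2 * (2 - α - β)) ≠ 0 := by positivity
  refine ⟨?_, ?_⟩
  · rw [dcov₁, ← key.tsum_eq, tsum_mul_left]
    field_simp
  · exact ((summable_mul_left_iff hC).1 key.summable).abs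
end
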